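/- Let S be a finite alphabet with complementation. If V, W ⊆ S^d are equivalent polybox codes, neither of which contains a twin pair, and |V| ≤ 11, then W = V. -/

import Mathlib

/-- `ES` is the set of all `B ⊆ S` containing exactly one letter from each
complementary pair `{s, s'}`. -/
def ESet {S : Type*} (c : S → S) : Set (Set S) :=
  {B | ∀ s, s ∈ B ↔ c s ∉ B}

/-- `Es = {B ∈ ES : s ∈ B}`. -/
def Eltr {S : Type*} (c : S → S) (s : S) : Set (Set S) :=
  {B | B ∈ ESet c ∧ s ∈ B}

/-- The equicomplementary realization `v̌ = Ev₁ × ⋯ × Ev_d` of a word `v ∈ S^d`,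
viewed as a box in the `d`-box `(ES)^d`. -/
def realize {S : Type*} (c : S → S) {d : ℕ} (v : Fin d → S) :
    Set (Fin d → Set S) :=
  {B | ∀ i, B i ∈ Eltr c (v i)}

/-- Words `u, v ∈ S^d` are dichotomous: some coordinate carries complementary
letters. -/
def Dichotomous {S : Type*} (c : S → S) {d : ℕ} (u v : Fin d → S) : Prop :=
  ∃ j, v j = c (u j)

/-- Words `u, v ∈ S^d` form a twin pair. -/
def TwinPair {S : Type*} (c : S → S) {d : ℕ} (u v : Fin d → S) : Prop :=
  ∃ j, v j = c (u j) ∧ ∀ i, i ≠ j → u i = v i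

/-- A polybox code: a set of pairwise dichotomous words. -/
def PolyboxCode {S : Type*} (c : S → S) {d : ℕ} (V : Set (Fin d → S)) : Prop :=
  ∀ u ∈ V, ∀ v ∈ V, u ≠ v → Dichotomous c u v

/-- Polybox codes `V, W ⊆ S^d` are equivalent if
`⋃_{v ∈ V} v̌ = ⋃_{w ∈ W} w̌`. -/
def Equivalent {S : Type*} (c : S → S) {d : ℕ}
    (V W : Set (Fin d → S)) : Prop :=
  (⋃ v ∈ V, realize c v) = ⋃ w ∈ W, realize c w

/-- A polybox code `V ⊆ S^d` is rigid if every polybox code equivalent to `V`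
equals `V`. -/
def Rigid {S : Type*} (c : S → S) {d : ℕ} (V : Set (Fin d → S)) : Prop :=
  ∀ W : Set (Fin d → S), PolyboxCode c W → Equivalent c V W → W = V

/-!
Two points of `(ES)^d` that differ only by exchanging the letters `r, r'` in one coordinate lie in
the same boxes of words carrying neither letter there. Hence, inside the box of a word `w` covered
by a code, the words carrying `r` and those carrying `r'` at a coordinate where `w` carries neither
project onto the same set. If the code has no twin pairs and does not contain `w`, this forces at
least five of its words to meet the box of `w`.

Removing the common words, we may take `V` and `W` disjoint; suppose they are nonempty. Let the
weight of a letter `s` at `i` be the number of `v ∈ V` with `v i = s` plus the number of `w ∈ W`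
with `w i = s'`. Counting points shows that `|V| = |W|`, that the weight does not change when `s` is
replaced by `s'` or `V` and `W` are exchanged, and that the weights at `i` of letters from different
complementary pairs add up to at most `|V|`. Two words `v ∈ V` and `w ∈ W` whose boxes intersect
carry, at some coordinate, letters from different pairs, so if `|V| ≤ 11`, one of these letters has
weight at most five. Then, up to complementation, this letter is carried by just two words `x, y` of
one of the codes, and its complement by at most three words of the same code; following the words
of the other code that cross the boxes of `x` and `y` excludes this.
-/

namespace PolyboxCode

open Function Finset

section Points

/-- The two axioms of an alphabet with complementation, for the map `c : s ↦ s'`. -/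
class IsComplementation {S : Type*} (c : S → S) : Prop where
  involutive : Involutive c
  apply_ne : ∀ s, c s ≠ s

variable {S : Type*} {c : S → S} {a b r s : S} {E : Set S} {d : ℕ} {i j t : Fin d}
  {T : Set (Fin d)} {u v w x : Fin d → S} {B : Fin d → Set S}

theorem apply_apply [IsComplementation c] (s : S) : c (c s) = s :=
  IsComplementation.involutive s

theorem ne_apply [IsComplementation c] (s : S) : s ≠ c s :=
  (IsComplementation.apply_ne s).symm

theorem ne_apply_comm [IsComplementation c] : a ≠ c b ↔ b ≠ c a := by
  rw [ne_comm, ne_eq, IsComplementation.involutive.eq_iff, ← ne_eq]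

theorem apply_notMem_of_mem_Eltr (h : E ∈ Eltr c a) : c a ∉ E :=
  (h.1 a).1 h.2

theorem notMem_Eltr_apply (h : E ∈ Eltr c a) : E ∉ Eltr c (c a) :=
  fun h' => apply_notMem_of_mem_Eltr h h'.2

theorem exists_mem_ESet_superset [IsComplementation c] (L : Set S)
    (hL : ∀ a ∈ L, ∀ b ∈ L, b ≠ c a) : ∃ E ∈ ESet c, L ⊆ E := by
  -- From a pair avoiding `L`, take the smaller letter for some well-ordering.
  refine ⟨{x | x ∈ L ∨ c x ∉ L ∧ WellOrderingRel x (c x)}, fun s => ?_, fun a ha => Or.inl ha⟩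
  simp only [Set.mem_ofPred_eq, apply_apply, not_or, not_and]
  constructor
  · rintro (hs | ⟨hcs, hlt⟩)
    · exact ⟨fun hcs => hL s hs _ hcs rfl, fun hs' => absurd hs hs'⟩
    · exact ⟨hcs, fun _ => asymm hlt⟩
  · rintro ⟨hcs, hlt⟩
    by_cases hs : s ∈ L
    · exact Or.inl hs
    · exact Or.inr ⟨hcs, ((trichotomous_of WellOrderingRel s (c s)).resolve_right
        (not_or.2 ⟨ne_apply s, hlt hs⟩))⟩

theorem exists_mem_Eltr₃ [IsComplementation c] (hab : b ≠ c a) (has : s ≠ c a) (hbs : s ≠ c b) :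
    ∃ E, E ∈ Eltr c a ∧ E ∈ Eltr c b ∧ E ∈ Eltr c s := by
  obtain ⟨E, hE, hL⟩ := exists_mem_ESet_superset (c := c) {a, b, s} (by
    simp only [Set.mem_insert_iff, Set.mem_singleton_iff]
    rintro p (rfl | rfl | rfl) q (rfl | rfl | rfl) <;>
      first | exact ne_apply _ | assumption | exact ne_apply_comm.1 ‹_›)
  exact ⟨E, ⟨hE, hL (by simp)⟩, ⟨hE, hL (by simp)⟩, ⟨hE, hL (by simp)⟩⟩

theorem exists_mem_Eltr₂ [IsComplementation c] (hab : b ≠ c a) :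
    ∃ E, E ∈ Eltr c a ∧ E ∈ Eltr c b := by
  obtain ⟨E, ha, hb, -⟩ := exists_mem_Eltr₃ hab hab (ne_apply b)
  exact ⟨E, ha, hb⟩

/-- Two words meet if they are not dichotomous, i.e. if their boxes intersect. -/
def Meets (c : S → S) (u v : Fin d → S) : Prop :=
  ∀ t, v t ≠ c (u t)

instance [DecidableEq S] : DecidablePred (Meets c u) :=
  fun v => inferInstanceAs (Decidable (∀ t, v t ≠ c (u t)))

theorem Meets.refl [IsComplementation c] (u : Fin d → S) : Meets c u u :=
  fun t => ne_apply (u t)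

theorem Meets.symm [IsComplementation c] (h : Meets c u v) : Meets c v u :=
  fun t => ne_apply_comm.1 (h t)

theorem meets_of_mem_realize (hu : B ∈ realize c u) (hv : B ∈ realize c v) : Meets c u v :=
  fun t ht => notMem_Eltr_apply (hu t) (ht ▸ hv t)

theorem Meets.exists_mem_realize [IsComplementation c] (h : Meets c u v) :
    ∃ B, B ∈ realize c u ∧ B ∈ realize c v := by
  choose B hu hv using fun t => exists_mem_Eltr₂ (h t)
  exact ⟨B, hu, hv⟩

/-- The cylinder over the face of the box `realize c v` spanned by the coordinates in `T`. -/
def cyl (c : S → S) (T : Set (Fin d)) (v : Fin d → S) : Set (Fin d → Set S) :=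
  T.pi fun t => Eltr c (v t)

theorem realize_subset_cyl (T : Set (Fin d)) (v : Fin d → S) : realize c v ⊆ cyl c T v :=
  fun _ hB t _ => hB t

theorem mem_realize_iff (i : Fin d) :
    B ∈ realize c v ↔ B i ∈ Eltr c (v i) ∧ B ∈ cyl c {i}ᶜ v := by
  refine ⟨fun h => ⟨h i, realize_subset_cyl _ _ h⟩, fun ⟨hi, h⟩ t => ?_⟩
  by_cases ht : t = i
  · exact ht ▸ hi
  · exact h t ht

theorem mem_cyl_congr {A : Fin d → Set S} (hA : ∀ t ∈ T, A t = B t) :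
    A ∈ cyl c T v ↔ B ∈ cyl c T v :=
  forall₂_congr fun t ht => by rw [hA t ht]

theorem cyl_congr (hu : ∀ t ∈ T, u t = v t) : cyl c T u = cyl c T v :=
  Set.pi_congr rfl fun t ht => by rw [hu t ht]

theorem update_mem_cyl (hi : i ∉ T) : update B i E ∈ cyl c T v ↔ B ∈ cyl c T v :=
  mem_cyl_congr fun _ ht => update_of_ne (ne_of_mem_of_not_mem ht hi) _ _

theorem cyl_update (hi : i ∉ T) : cyl c T (update v i a) = cyl c T v :=
  cyl_congr fun _ ht => update_of_ne (ne_of_mem_of_not_mem ht hi) _ _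

theorem update_mem_realize :
    update B i E ∈ realize c v ↔ E ∈ Eltr c (v i) ∧ B ∈ cyl c {i}ᶜ v := by
  rw [mem_realize_iff i, update_self, update_mem_cyl (by simp)]

theorem update_mem_cyl_compl_singleton (hij : i ≠ j) :
    update B j E ∈ cyl c {i}ᶜ v ↔ E ∈ Eltr c (v j) ∧ B ∈ cyl c {i, j}ᶜ v := by
  have hcompl : ({i}ᶜ : Set (Fin d)) \ {j} = {i, j}ᶜ := by
    ext t
    simp
  rw [cyl, Set.update_mem_pi_iff, hcompl, and_comm, cyl]
  exact and_congr_left fun _ => imp_iff_right hij.symm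

theorem update_update_mem_realize {F : Set S} (hij : i ≠ j) :
    update (update B i E) j F ∈ realize c v ↔
      E ∈ Eltr c (v i) ∧ F ∈ Eltr c (v j) ∧ B ∈ cyl c {i, j}ᶜ v := by
  rw [update_mem_realize, update_mem_cyl_compl_singleton hij.symm, Set.pair_comm, and_left_comm]

theorem mem_realize_update :
    B ∈ realize c (update v i a) ↔ B i ∈ Eltr c a ∧ B ∈ cyl c {i}ᶜ v := by
  rw [mem_realize_iff i, update_self, cyl_update (by simp)]

theorem Meets.eq_or_eq_of_forall_mem [IsComplementation c] (h : Meets c w x)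
    (ha : ∀ B ∈ realize c w, B ∈ realize c x → a ∈ B t) : a = w t ∨ a = x t := by
  by_contra! hne
  obtain ⟨E, hw, hx, hca⟩ := exists_mem_Eltr₃ (h t)
    (IsComplementation.involutive.injective.ne hne.1)
    (IsComplementation.involutive.injective.ne hne.2)
  obtain ⟨B, hBw, hBx⟩ := h.exists_mem_realize
  have hmem := ha (update B t E) (update_mem_realize.2 ⟨hw, realize_subset_cyl _ _ hBw⟩)
    (update_mem_realize.2 ⟨hx, realize_subset_cyl _ _ hBx⟩)
  rw [update_self] at hmem
  exact apply_notMem_of_mem_Eltr ⟨hca.1, hmem⟩ hca.2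

theorem Meets.exists_notMem_cyl [IsComplementation c] (h : Meets c w x) (ht : t ∈ T)
    (hvw : v t ≠ w t) (hvx : v t ≠ x t) : ∃ B ∈ cyl c T w, B ∈ cyl c T x ∧ B ∉ cyl c T v := by
  by_contra! hsub
  exact (h.eq_or_eq_of_forall_mem fun B hBw hBx => (hsub B (realize_subset_cyl T w hBw)
    (realize_subset_cyl T x hBx) t ht).2).elim hvw hvx

/-- Exchange of the two letters of the pair `{r, c r}` in a point of `ES`. -/
def swap (c : S → S) (r : S) (E : Set S) : Set S :=
  symmDiff E {r, c r}

theorem mem_swap_of_ne (hr : a ≠ r) (hcr : a ≠ c r) : a ∈ swap c r E ↔ a ∈ E := by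
  simp [swap, Set.mem_symmDiff, hr, hcr]

theorem mem_swap_self : r ∈ swap c r E ↔ r ∉ E := by
  simp [swap, Set.mem_symmDiff]

theorem swap_apply [IsComplementation c] : swap c (c r) E = swap c r E := by
  rw [swap, swap, apply_apply (c := c), Set.pair_comm]

theorem swap_swap : swap c r (swap c r E) = E :=
  symmDiff_symmDiff_cancel_right _ _

theorem swap_mem_ESet [IsComplementation c] (hE : E ∈ ESet c) : swap c r E ∈ ESet c := by
  intro s
  have hs : c s = r ∨ c s = c r ↔ s = r ∨ s = c r := by
    rw [IsComplementation.involutive.eq_iff, IsComplementation.involutive.injective.eq_iff,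
      eq_comm, or_comm]
  have hE := hE s
  simp only [swap, Set.mem_symmDiff, Set.mem_insert_iff, Set.mem_singleton_iff, hs]
  tauto

theorem swap_mem_Eltr_of_ne [IsComplementation c] (hr : a ≠ r) (hcr : a ≠ c r)
    (hE : E ∈ Eltr c a) : swap c r E ∈ Eltr c a :=
  ⟨swap_mem_ESet hE.1, (mem_swap_of_ne hr hcr).2 hE.2⟩

theorem swap_mem_Eltr_apply [IsComplementation c] (hE : E ∈ Eltr c r) :
    swap c r E ∈ Eltr c (c r) := by
  rw [← swap_apply]
  exact ⟨swap_mem_ESet hE.1, mem_swap_self.2 (apply_notMem_of_mem_Eltr hE)⟩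

/-- Exchange of the two letters of the pair `{r, c r}` in the coordinate `i` of a point. -/
def swapAt (c : S → S) (i : Fin d) (r : S) (B : Fin d → Set S) : Fin d → Set S :=
  update B i (swap c r (B i))

theorem swapAt_apply [IsComplementation c] : swapAt c i (c r) B = swapAt c i r B := by
  rw [swapAt, swapAt, swap_apply]

theorem swapAt_swapAt : swapAt c i r (swapAt c i r B) = B := by
  simp [swapAt, swap_swap]

theorem swapAt_mem_cyl (hi : i ∉ T) : swapAt c i r B ∈ cyl c T v ↔ B ∈ cyl c T v :=
  update_mem_cyl hi

theorem swapAt_mem_cyl_of_ne [IsComplementation c] (hr : v i ≠ r) (hcr : v i ≠ c r) :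
    swapAt c i r B ∈ cyl c T v ↔ B ∈ cyl c T v := by
  have swap_mem : ∀ B, B ∈ cyl c T v → swapAt c i r B ∈ cyl c T v := fun B hB =>
    (Set.update_mem_pi_iff_of_mem hB).2 fun hi => swap_mem_Eltr_of_ne hr hcr (hB i hi)
  exact ⟨fun h => swapAt_swapAt (c := c) (B := B) ▸ swap_mem _ h, swap_mem B⟩

theorem swapAt_mem_realize_of_ne [IsComplementation c] (hr : v i ≠ r) (hcr : v i ≠ c r) :
    swapAt c i r B ∈ realize c v ↔ B ∈ realize c v := by
  simpa only [cyl, Set.mem_univ_pi, realize, Set.mem_ofPred_eq] using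
    swapAt_mem_cyl_of_ne (T := Set.univ) (B := B) hr hcr

theorem eq_of_mem_realize {V : Set (Fin d → S)} (hV : PolyboxCode c V) (hu : u ∈ V) (hv : v ∈ V)
    (hBu : B ∈ realize c u) (hBv : B ∈ realize c v) : u = v := by
  by_contra hne
  obtain ⟨t, ht⟩ := hV u hu v hv hne
  exact meets_of_mem_realize hBu hBv t ht

theorem eq_of_meets [IsComplementation c] {V : Set (Fin d → S)} (hV : PolyboxCode c V)
    (hu : u ∈ V) (hv : v ∈ V) (h : Meets c u v) : u = v := by
  obtain ⟨B, hBu, hBv⟩ := h.exists_mem_realize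
  exact eq_of_mem_realize hV hu hv hBu hBv

theorem apply_of_swapAt_mem_realize [IsComplementation c] {V : Set (Fin d → S)}
    (hV : PolyboxCode c V) (hu : u ∈ V) (hv : v ∈ V) (hBu : B ∈ realize c u)
    (hBv : swapAt c i (u i) B ∈ realize c v) : v i = c (u i) := by
  by_contra hcr
  have hr : v i ≠ u i := by
    intro h
    have hmem := (hBv i).2
    rw [h, swapAt, update_self, mem_swap_self] at hmem
    exact hmem (hBu i).2
  exact hr (congrFun (eq_of_mem_realize hV hu hv hBu
    ((swapAt_mem_realize_of_ne hr hcr).1 hBv)).symm i)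

end Points

section Agreement

variable {S : Type*} {c : S → S} {d : ℕ} {l t : Fin d} {T : Set (Fin d)}
  {p q w x y z : Fin d → S} {P Q : Finset (Fin d → S)}

/-- Inside the box of `w`, the words of `P` and those of `Q` have the same union of projections
to the coordinates in `T`. -/
def AgreeOn (c : S → S) (T : Set (Fin d)) (w : Fin d → S) (P Q : Finset (Fin d → S)) : Prop :=
  ∀ B ∈ cyl c T w, (∃ p ∈ P, B ∈ cyl c T p) ↔ ∃ q ∈ Q, B ∈ cyl c T q

theorem AgreeOn.symm (h : AgreeOn c T w P Q) : AgreeOn c T w Q P :=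
  fun B hB => (h B hB).symm

theorem AgreeOn.nonempty [IsComplementation c] (h : AgreeOn c T w P Q)
    (hP : ∀ p ∈ P, Meets c w p) (hne : P.Nonempty) : Q.Nonempty := by
  obtain ⟨p, hp⟩ := hne
  obtain ⟨B, hBw, hBp⟩ := (hP p hp).exists_mem_realize
  obtain ⟨q, hq, -⟩ :=
    (h B (realize_subset_cyl T w hBw)).1 ⟨p, hp, realize_subset_cyl T p hBp⟩
  exact ⟨q, hq⟩

theorem AgreeOn.eq_or_eq [IsComplementation c] (h : AgreeOn c T w {p} Q)
    (hQ : ∀ q ∈ Q, Meets c w q) (hq : q ∈ Q) (ht : t ∈ T) : p t = w t ∨ p t = q t := by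
  refine (hQ q hq).eq_or_eq_of_forall_mem fun B hBw hBq => ?_
  obtain ⟨p', hp', hB⟩ := (h B (realize_subset_cyl T w hBw)).2 ⟨q, hq, realize_subset_cyl T q hBq⟩
  exact mem_singleton.1 hp' ▸ (hB t ht).2

/- Outside the box of `w` the inclusion holds because, by `AgreeOn.eq_or_eq`, where `p` differs
from `w` every word of `Q` has the letter of `p`. -/
theorem AgreeOn.cyl_subset [IsComplementation c] (h : AgreeOn c T w {p} Q) (hp : Meets c w p)
    (hQ : ∀ q ∈ Q, Meets c w q) : cyl c T p ⊆ ⋃ q ∈ Q, cyl c T q := by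
  intro B hB
  have exists_coord : ∀ t, ∃ E, E ∈ Eltr c (w t) ∧ E ∈ Eltr c (p t) ∧
      (t ∈ T → p t = w t → E = B t) := by
    intro t
    by_cases ht : t ∈ T ∧ p t = w t
    · exact ⟨B t, ht.2 ▸ hB t ht.1, hB t ht.1, fun _ _ => rfl⟩
    · obtain ⟨E, hEw, hEp⟩ := exists_mem_Eltr₂ (hp t)
      exact ⟨E, hEw, hEp, fun h1 h2 => absurd ⟨h1, h2⟩ ht⟩
  choose A hAw hAp hAB using exists_coord
  obtain ⟨q, hq, hAq⟩ := (h A fun t _ => hAw t).1 ⟨p, mem_singleton_self p, fun t _ => hAp t⟩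
  refine Set.mem_biUnion hq fun t ht => ?_
  by_cases hpw : p t = w t
  · exact hAB t ht hpw ▸ hAq t ht
  · have hBt : B t ∈ Eltr c (p t) := hB t ht
    rwa [(h.eq_or_eq hQ hq ht).resolve_left hpw] at hBt

theorem AgreeOn.singleton_eqOn [IsComplementation c] (h : AgreeOn c T w {x} {p})
    (hx : Meets c w x) (hp : Meets c w p) (ht : t ∈ T) : x t = p t := by
  have subset {x p : Fin d → S} (h : AgreeOn c T w {x} {p}) (hx : Meets c w x)
      (hp : Meets c w p) : cyl c T x ⊆ cyl c T p := by
    simpa using h.cyl_subset hx (by simpa using hp)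
  have := (Meets.refl (c := c) x).eq_or_eq_of_forall_mem (a := p t) (t := t)
    fun B hB _ => (subset h hx hp (realize_subset_cyl T x hB) t ht).2
  exact (or_self_iff.1 this).symm

section CylDifference

variable [IsComplementation c]

theorem apply_eq_of_cyl_inter_subset (hwx : Meets c w x) (hwy : Meets c w y)
    (hy : ∀ t ∈ T, y t = w t ∨ y t = x t) (h : cyl c T w ∩ cyl c T y ⊆ cyl c T x ∪ cyl c T z)
    (hl : l ∈ T) (hzl : z l = c (x l)) (ht : t ∈ T) (htl : t ≠ l) : x t = y t := by
  by_contra hne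
  have hyw : y t = w t := (hy t ht).resolve_right (Ne.symm hne)
  obtain ⟨B, hBw, hBy⟩ := hwy.exists_mem_realize
  obtain ⟨E, hEy, hEx⟩ := exists_mem_Eltr₂ (c := c)
    (IsComplementation.involutive.injective.ne hne)
  obtain ⟨F, hFw, hFx⟩ := exists_mem_Eltr₂ (hwx l)
  have hFy : F ∈ Eltr c (y l) := by rcases hy l hl with hyl | hyl <;> rwa [hyl]
  have hmem {v : Fin d → S} (hBv : B ∈ realize c v) (hE : E ∈ Eltr c (v t))
      (hF : F ∈ Eltr c (v l)) : update (update B t E) l F ∈ cyl c T v :=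
    (Set.update_mem_pi_iff_of_mem ((Set.update_mem_pi_iff_of_mem
      (realize_subset_cyl T v hBv)).2 fun _ => hE)).2 fun _ => hF
  rcases h ⟨hmem hBw (hyw ▸ hEy) hFw, hmem hBy hEy hFy⟩ with hx | hz
  · have hEx' := hx t ht
    rw [update_of_ne htl, update_self] at hEx'
    exact notMem_Eltr_apply hEx' hEx
  · have hFz : _ ∈ Eltr c (z l) := hz l hl
    rw [update_self, hzl] at hFz
    exact notMem_Eltr_apply hFx hFz

theorem apply_eq_or_eq_of_cyl_inter_subset (hwy : Meets c w y)
    (h : cyl c T w ∩ cyl c T y ⊆ cyl c T x ∪ cyl c T z) (hl : l ∈ T) (hyw : y l = w l)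
    (hxy : x l ≠ y l) (ht : t ∈ T) (htl : t ≠ l) : z t = w t ∨ z t = y t := by
  refine hwy.eq_or_eq_of_forall_mem fun B hBw hBy => ?_
  obtain ⟨E, hEy, hEx⟩ := exists_mem_Eltr₂ (c := c)
    (IsComplementation.involutive.injective.ne hxy)
  have hmem {v : Fin d → S} (hBv : B ∈ realize c v) (hE : E ∈ Eltr c (v l)) :
      update B l E ∈ cyl c T v :=
    (Set.update_mem_pi_iff_of_mem (realize_subset_cyl T v hBv)).2 fun _ => hE
  rcases h ⟨hmem hBw (hyw ▸ hEy), hmem hBy hEy⟩ with hx | hz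
  · have hEx' := hx l hl
    rw [update_self] at hEx'
    exact absurd hEx (notMem_Eltr_apply hEx')
  · simpa only [update_of_ne htl] using (hz t ht).2

end CylDifference

section Pair

variable [IsComplementation c] [DecidableEq S]

theorem AgreeOn.apply_eq_of_compl (h : AgreeOn c T w {x} {p, q}) (hp : Meets c w p)
    (hq : Meets c w q) (hl : l ∈ T) (hpq : q l = c (p l)) : x l = w l := by
  have hmeets : ∀ y ∈ ({p, q} : Finset _), Meets c w y := by simp [hp, hq]
  rcases h.eq_or_eq hmeets (q := p) (by simp) hl with hxw | hxp
  · exact hxw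
  rcases h.eq_or_eq hmeets (q := q) (by simp) hl with hxw | hxq
  · exact hxw
  · exact absurd (hxp.symm.trans (hxq.trans hpq)) (ne_apply _)

theorem AgreeOn.eqOn_of_compl (h : AgreeOn c T w {x} {p, q}) (hx : Meets c w x)
    (hp : Meets c w p) (hq : Meets c w q) (hl : l ∈ T) (hpq : q l = c (p l)) (ht : t ∈ T)
    (htl : t ≠ l) : p t = x t := by
  have hxl : x l = w l := h.apply_eq_of_compl hp hq hl hpq
  have hmeet : Meets c x (update x l (p l)) := by
    intro k
    obtain rfl | hk := eq_or_ne k l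
    · rw [update_self, hxl]
      exact hp k
    · rw [update_of_ne hk]
      exact ne_apply _
  have hmem : ∀ B ∈ realize c x, B ∈ realize c (update x l (p l)) → p t ∈ B t := by
    intro B hBx hB
    have hcover := h.cyl_subset hx (by simp [hp, hq]) (realize_subset_cyl T x hBx)
    simp only [mem_insert, mem_singleton, Set.iUnion_iUnion_eq_or_left,
      Set.iUnion_iUnion_eq_left] at hcover
    rcases hcover with hBp | hBq
    · exact (hBp t ht).2
    · exact absurd (hpq ▸ hBq l hl) (notMem_Eltr_apply (mem_realize_update.1 hB).1)
  simpa [update_of_ne htl] using hmeet.eq_or_eq_of_forall_mem hmem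

end Pair

end Agreement

section Covering

variable {S : Type*} {c : S → S} {d : ℕ} {i t : Fin d} {q r s : S}
  {p u v w : Fin d → S} {B : Fin d → Set S} {V P Q Y : Finset (Fin d → S)}

/-- The box of `v` is contained in the polybox of `V`. -/
def Covers (c : S → S) (V : Finset (Fin d → S)) (v : Fin d → S) : Prop :=
  realize c v ⊆ ⋃ w ∈ V, realize c w

theorem Covers.exists_mem (h : Covers c V v) (hB : B ∈ realize c v) : ∃ w ∈ V, B ∈ realize c w := by
  simpa using h hB

theorem Covers.mono (h : Covers c Q v) (hQV : Q ⊆ V) : Covers c V v :=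
  h.trans (Set.biUnion_subset_biUnion_left hQV)

/-- A polybox code without twin pairs. -/
structure TwinFreeCode (c : S → S) (V : Finset (Fin d → S)) : Prop where
  code : PolyboxCode c (V : Set (Fin d → S))
  not_twinPair : ∀ u ∈ V, ∀ v ∈ V, ¬ TwinPair c u v

theorem TwinFreeCode.mono (hV : TwinFreeCode c V) (hPV : P ⊆ V) : TwinFreeCode c P where
  code u hu v hv := hV.code u (hPV hu) v (hPV hv)
  not_twinPair u hu v hv := hV.not_twinPair u (hPV hu) v (hPV hv)

theorem TwinFreeCode.update_notMem (hV : TwinFreeCode c V) (hu : u ∈ V) (i : Fin d) :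
    update u i (c (u i)) ∉ V := fun h =>
  hV.not_twinPair u hu _ h ⟨i, update_self .., fun _ ht => (update_of_ne ht ..).symm⟩

theorem TwinFreeCode.eq_of_forall_ne [IsComplementation c] (hV : TwinFreeCode c V) (hu : u ∈ V)
    (hv : v ∈ V) (h : ∀ t, t ≠ i → u t = v t) : u = v := by
  by_contra hne
  obtain ⟨t, ht⟩ := hV.code u hu v hv hne
  obtain rfl | hti := eq_or_ne t i
  · exact hV.not_twinPair u hu v hv ⟨t, ht, h⟩
  · exact ne_apply (u t) ((h t hti).trans ht)

/-- `P` and `Q` consist of words meeting `v` that carry the complementary letters `r` and `c r` at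
`i`, and they cut the same piece out of the face `{i}ᶜ` of `v`. -/
structure Opposed (c : S → S) (v : Fin d → S) (i : Fin d) (r : S) (P Q : Finset (Fin d → S)) :
    Prop where
  left_apply : ∀ p ∈ P, p i = r
  right_apply : ∀ q ∈ Q, q i = c r
  left_meets : ∀ p ∈ P, Meets c v p
  right_meets : ∀ q ∈ Q, Meets c v q
  agreeOn : AgreeOn c {i}ᶜ v P Q

theorem Opposed.symm [IsComplementation c] (h : Opposed c v i r P Q) :
    Opposed c v i (c r) Q P where
  left_apply := h.right_apply
  right_apply := by simpa only [apply_apply] using h.left_apply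
  left_meets := h.right_meets
  right_meets := h.left_meets
  agreeOn := h.agreeOn.symm

theorem Opposed.covers_update [IsComplementation c] (h : Opposed c v i r {p} Q) :
    Covers c Q (update p i (c r)) := by
  intro B hB
  obtain ⟨hBi, hBp⟩ := mem_realize_update.1 hB
  obtain ⟨q, hq, hBq⟩ := Set.mem_iUnion₂.1
    (h.agreeOn.cyl_subset (h.left_meets p (mem_singleton_self p)) h.right_meets hBp)
  exact Set.mem_biUnion hq ((mem_realize_iff i).2 ⟨(h.right_apply q hq).symm ▸ hBi, hBq⟩)

theorem Opposed.update_notMem_of_singleton (h : Opposed c v i r {p} Q) (hV : TwinFreeCode c V)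
    (hp : p ∈ V) : update p i (c r) ∉ V :=
  h.left_apply p (mem_singleton_self p) ▸ hV.update_notMem hp i

section Slices

variable [DecidableEq S]

/-- The words of `V` whose boxes intersect that of `v`. -/
def meeting (c : S → S) (V : Finset (Fin d → S)) (v : Fin d → S) : Finset (Fin d → S) :=
  V.filter (Meets c v)

/-- The words of `V` with the letter `s` at `i`. -/
def slice (V : Finset (Fin d → S)) (i : Fin d) (s : S) : Finset (Fin d → S) :=
  V.filter fun w => w i = s

theorem mem_meeting : w ∈ meeting c V v ↔ w ∈ V ∧ Meets c v w :=
  mem_filter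

theorem mem_slice : w ∈ slice V i s ↔ w ∈ V ∧ w i = s :=
  mem_filter

theorem meeting_subset : meeting c V v ⊆ V :=
  filter_subset _ _

theorem slice_subset : slice V i s ⊆ V :=
  filter_subset _ _

theorem sum_card_slice (V : Finset (Fin d → S)) (i : Fin d) (R : Finset S) :
    ∑ r ∈ R, #(slice V i r) = #{w ∈ V | w i ∈ R} :=
  sum_card_fiberwise_eq_card_filter V R fun w => w i

theorem card_slice_add_card_slice (V : Finset (Fin d → S)) (i : Fin d) (hrs : r ≠ s) :
    #(slice V i r) + #(slice V i s) = #{w ∈ V | w i = r ∨ w i = s} := by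
  rw [← sum_pair (f := fun r => #(slice V i r)) hrs, sum_card_slice]
  simp only [mem_insert, mem_singleton]

theorem card_slice_add_card_slice_le (V : Finset (Fin d → S)) (i : Fin d) (hrs : r ≠ s) :
    #(slice V i r) + #(slice V i s) ≤ #V :=
  (card_slice_add_card_slice V i hrs).trans_le (card_filter_le _ _)

theorem apply_eq_or_eq_of_card_le (hrs : r ≠ s) (h : #V ≤ #(slice V i r) + #(slice V i s))
    (hu : u ∈ V) : u i = r ∨ u i = s :=
  card_filter_eq_iff.1 ((card_filter_le _ _).antisymm
    (h.trans_eq (card_slice_add_card_slice V i hrs))) u hu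

variable [IsComplementation c]

theorem sum_card_slice_add_le (V : Finset (Fin d → S)) (i : Fin d) {R : Finset S}
    (hR : ∀ q ∈ R, ∀ r ∈ R, q ≠ c r) :
    ∑ r ∈ R, (#(slice V i r) + #(slice V i (c r))) ≤ #V := by
  have hdisj : Disjoint R (R.image c) := by
    simp only [disjoint_left, mem_image, not_exists, not_and]
    exact fun q hq r hr h => hR q hq r hr h.symm
  calc ∑ r ∈ R, (#(slice V i r) + #(slice V i (c r)))
      = ∑ r ∈ R ∪ R.image c, #(slice V i r) := by
        rw [sum_union hdisj, sum_add_distrib,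
          sum_image IsComplementation.involutive.injective.injOn]
    _ ≤ #V := (sum_card_slice V i _).trans_le (card_filter_le _ _)

theorem card_slice_add_pair_le (V : Finset (Fin d → S)) (i : Fin d) (hqr : q ≠ r)
    (hqcr : q ≠ c r) : #(slice V i q) + #(slice V i (c q)) +
      (#(slice V i r) + #(slice V i (c r))) ≤ #V := by
  have hR : ∀ a ∈ ({q, r} : Finset S), ∀ b ∈ ({q, r} : Finset S), a ≠ c b := by
    simp [ne_apply, hqcr, ne_apply_comm.1 hqcr]
  simpa [sum_pair hqr] using sum_card_slice_add_le V i hR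

theorem meeting_subset_of_covers (hV : PolyboxCode c (V : Set (Fin d → S))) (hQV : Q ⊆ V)
    (h : Covers c Q v) : meeting c V v ⊆ Q := by
  intro w hw
  obtain ⟨hwV, hvw⟩ := mem_meeting.1 hw
  obtain ⟨B, hBv, hBw⟩ := hvw.exists_mem_realize
  obtain ⟨q, hq, hBq⟩ := h.exists_mem hBv
  exact eq_of_mem_realize hV hwV (hQV hq) hBw hBq ▸ hq

theorem exists_mem_slice_apply (hY : PolyboxCode c (Y : Set (Fin d → S)))
    (hmeets : ∀ y ∈ Y, Meets c w y)
    (hswap : ∀ B ∈ realize c w, (∃ y ∈ Y, B ∈ realize c y) →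
      ∃ y ∈ Y, swapAt c i r B ∈ realize c y)
    (hB : B ∈ cyl c {i}ᶜ w) (h : ∃ p ∈ slice Y i r, B ∈ cyl c {i}ᶜ p) :
    ∃ p ∈ slice Y i (c r), B ∈ cyl c {i}ᶜ p := by
  obtain ⟨p, hp, hBp⟩ := h
  obtain ⟨hpY, rfl⟩ := mem_slice.1 hp
  obtain ⟨E, hEw, hEp⟩ := exists_mem_Eltr₂ (hmeets p hpY i)
  have hAp : update B i E ∈ realize c p := update_mem_realize.2 ⟨hEp, hBp⟩
  obtain ⟨u, hu, hAu⟩ := hswap _ (update_mem_realize.2 ⟨hEw, hB⟩) ⟨p, hpY, hAp⟩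
  refine ⟨u, mem_slice.2 ⟨hu, apply_of_swapAt_mem_realize hY hpY hu hAp hAu⟩, ?_⟩
  have hi : i ∉ ({i}ᶜ : Set (Fin d)) := by simp
  exact (update_mem_cyl hi).1 ((swapAt_mem_cyl hi).1 (realize_subset_cyl _ _ hAu))

theorem opposed_slice (hY : PolyboxCode c (Y : Set (Fin d → S)))
    (hmeets : ∀ y ∈ Y, Meets c w y)
    (hswap : ∀ B ∈ realize c w, (∃ y ∈ Y, B ∈ realize c y) →
      ∃ y ∈ Y, swapAt c i r B ∈ realize c y) :
    Opposed c w i r (slice Y i r) (slice Y i (c r)) where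
  left_apply p hp := (mem_slice.1 hp).2
  right_apply p hp := (mem_slice.1 hp).2
  left_meets p hp := hmeets p (slice_subset hp)
  right_meets p hp := hmeets p (slice_subset hp)
  agreeOn B hB := by
    refine ⟨exists_mem_slice_apply hY hmeets hswap hB, fun h => ?_⟩
    simpa only [apply_apply] using
      exists_mem_slice_apply hY hmeets (r := c r) (by simpa only [swapAt_apply]) hB h

theorem Covers.opposed_slice (hV : PolyboxCode c (V : Set (Fin d → S))) (h : Covers c V v)
    (hr : v i ≠ r) (hcr : v i ≠ c r) :
    Opposed c v i r (slice (meeting c V v) i r) (slice (meeting c V v) i (c r)) := by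
  refine PolyboxCode.opposed_slice
    (fun u hu w hw => hV u (meeting_subset hu) w (meeting_subset hw))
    (fun w hw => (mem_meeting.1 hw).2) fun B hB _ => ?_
  have hswap : swapAt c i r B ∈ realize c v := (swapAt_mem_realize_of_ne hr hcr).2 hB
  obtain ⟨u, hu, hBu⟩ := h.exists_mem hswap
  exact ⟨u, mem_meeting.2 ⟨hu, meets_of_mem_realize hswap hBu⟩, hBu⟩

theorem exists_twinPair_of_covers (hV : PolyboxCode c (V : Set (Fin d → S))) (h : Covers c V v)
    (hv : v ∉ V) (hletters : ∀ t, ∃ r, ∀ u ∈ meeting c V v, u t = r ∨ u t = c r) :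
    ∃ w ∈ V, ∃ u ∈ V, TwinPair c w u := by
  obtain ⟨B, hBv, -⟩ := (Meets.refl (c := c) v).exists_mem_realize
  obtain ⟨w, hw, hBw⟩ := h.exists_mem hBv
  have hvw : Meets c v w := meets_of_mem_realize hBv hBw
  obtain ⟨i, hi⟩ := Function.ne_iff.1 (ne_of_mem_of_not_mem hw hv)
  have hswap : swapAt c i (w i) B ∈ realize c v :=
    (swapAt_mem_realize_of_ne hi.symm (hvw.symm i)).2 hBv
  obtain ⟨u, hu, hBu⟩ := h.exists_mem hswap
  refine ⟨w, hw, u, hu, i, apply_of_swapAt_mem_realize hV hw hu hBw hBu, fun t ht => ?_⟩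
  have hBut : B t ∈ Eltr c (u t) := by simpa [swapAt, ht] using hBu t
  obtain ⟨r, hr⟩ := hletters t
  rcases hr u (mem_meeting.2 ⟨hu, meets_of_mem_realize hswap hBu⟩) with hur | hur <;>
    rcases hr w (mem_meeting.2 ⟨hw, hvw⟩) with hwr | hwr
  · rw [hur, hwr]
  · exact absurd (hwr ▸ hBw t) (notMem_Eltr_apply (hur ▸ hBut))
  · exact absurd (hur ▸ hBut) (notMem_Eltr_apply (hwr ▸ hBw t))
  · rw [hur, hwr]

namespace TwinFreeCode

theorem apply_eq_or_eq_of_card_meeting_lt (hV : TwinFreeCode c V) (h : Covers c V v)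
    (hlt : #(meeting c V v) < 5)
    (hmin : ∀ u ∉ V, Covers c V u → #(meeting c V u) < #(meeting c V v) →
      5 ≤ #(meeting c V u)) (hr : v t ≠ r) (hcr : v t ≠ c r)
    (hne : (slice (meeting c V v) t r).Nonempty) (hu : u ∈ meeting c V v) :
    u t = r ∨ u t = c r := by
  set M := meeting c V v
  have hsub {r : S} : slice M t r ⊆ V := slice_subset.trans meeting_subset
  have hopp : Opposed c v t r (slice M t r) (slice M t (c r)) := h.opposed_slice hV.code hr hcr
  have hle : #(slice M t r) + #(slice M t (c r)) ≤ #M :=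
    card_slice_add_card_slice_le M t (ne_apply r)
  have hne' : (slice M t (c r)).Nonempty := hopp.agreeOn.nonempty hopp.left_meets hne
  have two_le {P Q : Finset (Fin d → S)} {r : S} (hP : P ⊆ V) (hQ : Q ⊆ V) (hne : P.Nonempty)
      (hPQ : #P + #Q ≤ #M) (hopp : Opposed c v t r P Q) : 2 ≤ #P := by
    by_contra! hP1
    obtain ⟨p, rfl⟩ := card_eq_one.1 (by have := hne.card_pos; omega : #P = 1)
    have := card_le_card (meeting_subset_of_covers hV.code hQ hopp.covers_update)
    rw [card_singleton] at hPQ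
    have := hmin _ (hopp.update_notMem_of_singleton hV (hP (mem_singleton_self p)))
      (hopp.covers_update.mono hQ) (by omega)
    omega
  have h2 := two_le hsub hsub hne hle hopp
  have h2' := two_le hsub hsub hne' (by omega) hopp.symm
  exact apply_eq_or_eq_of_card_le (ne_apply r) (by omega) hu

theorem five_le_card_meeting (hV : TwinFreeCode c V) (h : Covers c V v) (hv : v ∉ V) :
    5 ≤ #(meeting c V v) := by
  induction hn : #(meeting c V v) using Nat.strong_induction_on generalizing v with
  | _ n ih =>
  subst hn
  by_contra! hlt
  obtain ⟨w, hw, u, hu, htwin⟩ := exists_twinPair_of_covers hV.code h hv fun t => by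
    by_cases hall : ∀ x ∈ meeting c V v, x t = v t
    · exact ⟨v t, fun x hx => Or.inl (hall x hx)⟩
    · push Not at hall
      obtain ⟨x, hx, hxt⟩ := hall
      exact ⟨x t, fun u hu => hV.apply_eq_or_eq_of_card_meeting_lt h hlt
        (fun u hu hcov hcard => ih _ hcard hcov hu rfl) hxt.symm
        ((mem_meeting.1 hx).2.symm t) ⟨x, mem_slice.2 ⟨hx, rfl⟩⟩ hu⟩
  exact hV.not_twinPair w hw u hu htwin

end TwinFreeCode

end Slices

section OpposedCard

variable [IsComplementation c]

theorem TwinFreeCode.five_le_card_of_covers (hV : TwinFreeCode c V) (hQ : Q ⊆ V) (h : Covers c Q v)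
    (hv : v ∉ V) : 5 ≤ #Q := by
  classical
  exact (hV.five_le_card_meeting (h.mono hQ) hv).trans
    (card_le_card (meeting_subset_of_covers hV.code hQ h))

theorem Opposed.five_le_card_right (h : Opposed c v i r P Q) (hV : TwinFreeCode c V)
    (hP : P ⊆ V) (hQ : Q ⊆ V) (hP1 : #P = 1) : 5 ≤ #Q := by
  obtain ⟨p, rfl⟩ := card_eq_one.1 hP1
  exact hV.five_le_card_of_covers hQ h.covers_update
    (h.update_notMem_of_singleton hV (hP (mem_singleton_self p)))

theorem Opposed.two_le_card (h : Opposed c v i r P Q) (hV : TwinFreeCode c V) (hP : P ⊆ V)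
    (hQ : Q ⊆ V) (hne : P.Nonempty) (h5 : #P + #Q ≤ 5) : 2 ≤ #P ∧ 2 ≤ #Q := by
  have hleft := h.five_le_card_right hV hP hQ
  have hright := h.symm.five_le_card_right hV hQ hP
  have := hne.card_pos
  have := (h.agreeOn.nonempty h.left_meets hne).card_pos
  omega

theorem Opposed.four_le_card_add_card (h : Opposed c v i r P Q) (hV : TwinFreeCode c V)
    (hP : P ⊆ V) (hQ : Q ⊆ V) (hne : P.Nonempty) : 4 ≤ #P + #Q := by
  have := h.two_le_card hV hP hQ hne
  omega

end OpposedCard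

section FiveWords

variable [DecidableEq S] [IsComplementation c]

theorem Covers.update_of_forall_apply (h : Covers c V v) (hr : r ≠ c (v t))
    (hall : ∀ u ∈ meeting c V v, u t = r ∨ u t = c r) :
    Covers c (slice (meeting c V v) t r) (update v t r) := by
  intro B hB
  obtain ⟨hBt, hBv⟩ := mem_realize_update.1 hB
  obtain ⟨E, hEv, hEr⟩ := exists_mem_Eltr₂ hr
  have hA : update B t E ∈ realize c v := update_mem_realize.2 ⟨hEv, hBv⟩
  obtain ⟨u, hu, hAu⟩ := h.exists_mem hA
  have hu : u ∈ meeting c V v := mem_meeting.2 ⟨hu, meets_of_mem_realize hA hAu⟩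
  obtain ⟨hEu, hBu⟩ := update_mem_realize.1 hAu
  have hut : u t = r := (hall u hu).resolve_right fun hut =>
    notMem_Eltr_apply hEr (hut ▸ hEu)
  exact Set.mem_biUnion (mem_slice.2 ⟨hu, hut⟩)
    ((mem_realize_iff t).2 ⟨hut.symm ▸ hBt, hBu⟩)

namespace TwinFreeCode

theorem four_le_card_slice_add (hV : TwinFreeCode c V) (h : Covers c V v)
    (hu : u ∈ meeting c V v) (hut : u t ≠ v t) :
    4 ≤ #(slice (meeting c V v) t (u t)) + #(slice (meeting c V v) t (c (u t))) :=
  (h.opposed_slice hV.code hut.symm ((mem_meeting.1 hu).2.symm t)).four_le_card_add_card hV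
    (slice_subset.trans meeting_subset) (slice_subset.trans meeting_subset)
    ⟨u, mem_slice.2 ⟨hu, rfl⟩⟩

theorem exists_apply_eq_of_card_meeting_eq_five (hV : TwinFreeCode c V) (h : Covers c V v)
    (h5 : #(meeting c V v) = 5) (t : Fin d) : ∃ w ∈ meeting c V v, w t = v t := by
  by_contra! hno
  have hsub {r : S} : slice (meeting c V v) t r ⊆ V := slice_subset.trans meeting_subset
  obtain ⟨w, hw⟩ : (meeting c V v).Nonempty := card_pos.1 (by omega)
  have hvw : Meets c v w := (mem_meeting.1 hw).2
  have hall : ∀ u ∈ meeting c V v, u t = w t ∨ u t = c (w t) := by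
    by_contra! hcon
    obtain ⟨u, hu, hne, hcne⟩ := hcon
    have := hV.four_le_card_slice_add h hu (hno u hu)
    have := hV.four_le_card_slice_add h hw (hno w hw)
    have := card_slice_add_pair_le (meeting c V v) t hne hcne
    omega
  have hcov : Covers c (slice (meeting c V v) t (w t)) (update v t (w t)) :=
    h.update_of_forall_apply (hvw t) hall
  have hle := card_slice_add_card_slice_le (meeting c V v) t (ne_apply (c := c) (w t))
  have h2 := (h.opposed_slice hV.code (hno w hw).symm (hvw.symm t)).two_le_card hV hsub hsub
    ⟨w, mem_slice.2 ⟨hw, rfl⟩⟩ (by omega)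
  have hmem : update v t (w t) ∈ V := by
    by_contra hmem
    have := hV.five_le_card_of_covers hsub hcov hmem
    omega
  have hsing : slice (meeting c V v) t (w t) ⊆ {update v t (w t)} := by
    intro u hu
    obtain ⟨hu, hut⟩ := mem_slice.1 hu
    obtain ⟨huV, hvu⟩ := mem_meeting.1 hu
    refine mem_singleton.2 (eq_of_meets hV.code huV hmem (Meets.symm fun k => ?_))
    obtain rfl | hk := eq_or_ne k t
    · rw [update_self, hut]
      exact ne_apply _
    · rw [update_of_ne hk]
      exact hvu k
  have := card_le_card hsing
  rw [card_singleton] at this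
  omega

theorem meets_of_meeting_subset (hV : TwinFreeCode c V) (h : Covers c V v)
    (h5 : #(meeting c V v) = 5) (hsub : meeting c V v ⊆ meeting c V w) : Meets c v w := by
  intro t ht
  obtain ⟨u, hu, hut⟩ := hV.exists_apply_eq_of_card_meeting_eq_five h h5 t
  exact (mem_meeting.1 (hsub hu)).2 t (by rw [hut, ht, apply_apply (c := c)])

end TwinFreeCode

end FiveWords

end Covering

section Counting

variable {S : Type*} {c : S → S} {a b s : S} {d : ℕ} {u v : Fin d → S}
  {V W : Finset (Fin d → S)}

theorem encard_Eltr_le (a b : S) : (Eltr c a).encard ≤ (Eltr c b).encard := by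
  classical
  -- Passing to the complement of the points that avoid `b` is injective, as these contain `a`.
  refine Set.encard_le_encard_of_injOn (f := fun E => if b ∈ E then E else Eᶜ) ?_ ?_
  · intro E hE
    dsimp only
    split_ifs with hb
    · exact ⟨hE.1, hb⟩
    · exact ⟨fun s => by simpa using (hE.1 s).not, hb⟩
  · intro E hE F hF hEF
    dsimp only at hEF
    split_ifs at hEF
    · exact hEF
    · exact absurd hF.2 (by simpa [hEF] using hE.2)
    · exact absurd hE.2 (by simpa [← hEF] using hF.2)
    · exact compl_injective hEF

theorem ncard_realize (u v : Fin d → S) : (realize c u).ncard = (realize c v).ncard := by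
  have encard_eq (w : Fin d → S) : (realize c w).encard = ∏ t, (Eltr c (w t)).encard := by
    rw [← Set.encard_pi_eq_prod_encard]
    congr
    ext B
    simp [realize]
  rw [Set.ncard, Set.ncard, encard_eq, encard_eq]
  congr! 2 with t
  exact (encard_Eltr_le _ _).antisymm (encard_Eltr_le _ _)

variable [Finite S]

theorem sum_finsum_realize {M : Type*} [AddCommMonoid M] (hV : PolyboxCode c (V : Set (Fin d → S)))
    (f : (Fin d → Set S) → M) :
    ∑ v ∈ V, ∑ᶠ B ∈ realize c v, f B = ∑ᶠ B ∈ ⋃ v ∈ (V : Set (Fin d → S)), realize c v, f B := by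
  rw [finsum_mem_biUnion _ V.finite_toSet fun v _ => Set.toFinite _, finsum_mem_coe_finset]
  exact fun u hu v hv huv => Set.disjoint_left.2 fun B hBu hBv =>
    huv (eq_of_mem_realize hV hu hv hBu hBv)

theorem finsum_mem_const_realize {f : (Fin d → Set S) → ℤ} {k : ℤ}
    (hf : ∀ B ∈ realize c v, f B = k) : ∑ᶠ B ∈ realize c v, f B = (realize c v).ncard * k := by
  rw [finsum_mem_congr rfl hf, finsum_mem_eq_finite_toFinset_sum _ (Set.toFinite _), sum_const,
    ← Set.ncard_eq_toFinset_card, nsmul_eq_mul]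

theorem sum_finsum_realize_eq {M : Type*} [AddCommMonoid M]
    (hV : PolyboxCode c (V : Set (Fin d → S))) (hW : PolyboxCode c (W : Set (Fin d → S)))
    (h : Equivalent c (V : Set (Fin d → S)) W) (f : (Fin d → Set S) → M) :
    ∑ v ∈ V, ∑ᶠ B ∈ realize c v, f B = ∑ w ∈ W, ∑ᶠ B ∈ realize c w, f B := by
  rw [sum_finsum_realize hV, sum_finsum_realize hW, h]

variable [IsComplementation c]

theorem exists_forall_ncard_realize_eq (c : S → S) [IsComplementation c] (d : ℕ) :
    ∃ K : ℕ, 0 < K ∧ ∀ v : Fin d → S, (realize c v).ncard = K := by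
  cases isEmpty_or_nonempty (Fin d → S) with
  | inl _ => exact ⟨1, one_pos, isEmptyElim⟩
  | inr hne =>
    obtain ⟨u⟩ := hne
    obtain ⟨B, hB, -⟩ := (Meets.refl (c := c) u).exists_mem_realize
    exact ⟨_, (Set.ncard_pos (Set.toFinite _)).2 ⟨B, hB⟩, fun v => ncard_realize v u⟩

theorem card_eq_of_equivalent
    (hV : PolyboxCode c (V : Set (Fin d → S))) (hW : PolyboxCode c (W : Set (Fin d → S)))
    (h : Equivalent c (V : Set (Fin d → S)) W) : #V = #W := by
  obtain ⟨K, hK, hcard⟩ := exists_forall_ncard_realize_eq c d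
  have hsum := sum_finsum_realize_eq hV hW h fun _ => 1
  simp only [finsum_one, hcard, sum_const, smul_eq_mul] at hsum
  exact Nat.eq_of_mul_eq_mul_right hK hsum

section Balance

variable [DecidableEq S]

open scoped Classical in
theorem finsum_sign_realize (v : Fin d → S) (i : Fin d) (s : S) :
    ∑ᶠ B ∈ realize c v, (if s ∈ B i then 1 else -1 : ℤ) =
      (realize c v).ncard * ((if v i = s then 1 else 0) - if v i = c s then 1 else 0) := by
  obtain hs | hs := eq_or_ne (v i) s
  · rw [if_pos hs, if_neg (hs ▸ ne_apply s), sub_zero]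
    exact finsum_mem_const_realize fun B hB => if_pos (hs ▸ (hB i).2)
  obtain hcs | hcs := eq_or_ne (v i) (c s)
  · rw [if_neg hs, if_pos hcs, zero_sub]
    refine finsum_mem_const_realize fun B hB => if_neg fun h => ?_
    exact notMem_Eltr_apply ⟨(hB i).1, h⟩ (hcs ▸ hB i)
  -- The swap of `s` and `c s` in the coordinate `i` reverses all signs.
  have hneg : ∑ᶠ B ∈ realize c v, (if s ∈ B i then 1 else -1 : ℤ) =
      ∑ᶠ B ∈ realize c v, -(if s ∈ B i then 1 else -1 : ℤ) := by
    refine finsum_mem_eq_of_bijOn (swapAt c i s)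
      (Set.InvOn.bijOn (f' := swapAt c i s) ⟨fun _ _ => swapAt_swapAt, fun _ _ => swapAt_swapAt⟩
        (fun _ => (swapAt_mem_realize_of_ne hs hcs).2)
        fun _ => (swapAt_mem_realize_of_ne hs hcs).2) fun B _ => ?_
    by_cases h : s ∈ B i <;> simp [swapAt, mem_swap_self, h]
  rw [finsum_mem_neg_distrib _ (Set.toFinite _)] at hneg
  rw [if_neg hs, if_neg hcs, sub_zero, mul_zero]
  omega

theorem card_slice_add_of_equivalent
    (hV : PolyboxCode c (V : Set (Fin d → S))) (hW : PolyboxCode c (W : Set (Fin d → S)))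
    (h : Equivalent c (V : Set (Fin d → S)) W) (i : Fin d) (s : S) :
    #(slice V i s) + #(slice W i (c s)) = #(slice V i (c s)) + #(slice W i s) := by
  classical
  obtain ⟨K, hK, hcard⟩ := exists_forall_ncard_realize_eq c d
  have hsum := sum_finsum_realize_eq hV hW h fun B => (if s ∈ B i then 1 else -1 : ℤ)
  simp only [finsum_sign_realize, hcard, ← mul_sum] at hsum
  have := mul_left_cancel₀ (Nat.cast_ne_zero.2 hK.ne') hsum
  simp only [sum_sub_distrib, sum_boole] at this
  unfold slice
  omega

end Balance

end Counting

section Pairs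

variable {S : Type*} {c : S → S} {d : ℕ} {i : Fin d} {q r s : S}
  {u v w : Fin d → S} {B : Fin d → Set S} {V W : Finset (Fin d → S)}

/-- Two disjoint equivalent twin-free codes. Removing their common words from two equivalent
twin-free codes leaves such a pair. -/
structure TwinFreePair (c : S → S) (V W : Finset (Fin d → S)) : Prop where
  left : TwinFreeCode c V
  right : TwinFreeCode c W
  disjoint : Disjoint V W
  equivalent : Equivalent c (V : Set (Fin d → S)) W

namespace TwinFreePair

theorem symm (h : TwinFreePair c V W) : TwinFreePair c W V where
  left := h.right
  right := h.left
  disjoint := h.disjoint.symm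
  equivalent := h.equivalent.symm

theorem covers (h : TwinFreePair c V W) (hv : v ∈ V) : Covers c W v :=
  (Set.subset_biUnion_of_mem (mem_coe.2 hv)).trans h.equivalent.subset

theorem notMem (h : TwinFreePair c V W) (hv : v ∈ V) : v ∉ W :=
  Finset.disjoint_left.1 h.disjoint hv

section Complement

variable [IsComplementation c]

theorem exists_mem_of_mem_realize_update (h : TwinFreePair c V W) (hw : w ∈ W)
    (hV : ∀ v ∈ V, v i ≠ w i) (hB : B ∈ realize c (update w i (c (w i)))) :
    ∃ v ∈ V, v i ≠ c (w i) ∧ B ∈ realize c v ∧ swapAt c i (w i) B ∈ realize c w := by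
  obtain ⟨hBi, hBw⟩ := mem_realize_update.1 hB
  have hswap : swapAt c i (w i) B ∈ realize c w := by
    refine update_mem_realize.2 ⟨?_, hBw⟩
    simpa only [swap_apply, apply_apply] using swap_mem_Eltr_apply hBi
  obtain ⟨v, hv, hBv⟩ := (h.symm.covers hw).exists_mem hswap
  have hvi : v i ≠ c (w i) := meets_of_mem_realize hswap hBv i
  exact ⟨v, hv, hvi, (swapAt_mem_realize_of_ne (hV v hv) hvi).1 hBv, hswap⟩

variable [DecidableEq S]

theorem covers_slice_update (h : TwinFreePair c V W) (hw : w ∈ W) (hV : ∀ v ∈ V, v i ≠ w i) :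
    Covers c (slice W i (c (w i))) (update w i (c (w i))) := by
  intro B hB
  obtain ⟨v, hv, -, hBv, hswap⟩ := h.exists_mem_of_mem_realize_update hw hV hB
  obtain ⟨u, hu, hBu⟩ := (h.covers hv).exists_mem hBv
  refine Set.mem_biUnion (mem_slice.2 ⟨hu, ?_⟩) hBu
  exact apply_of_swapAt_mem_realize h.right.code hw hu hswap (by rwa [swapAt_swapAt])

theorem meeting_update_eq_slice (h : TwinFreePair c V W) (hw : w ∈ W)
    (hV : ∀ v ∈ V, v i ≠ w i) (h5 : #(slice W i (c (w i))) ≤ 5) :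
    meeting c W (update w i (c (w i))) = slice W i (c (w i)) ∧ #(slice W i (c (w i))) = 5 := by
  have hcov := h.covers_slice_update hw hV
  have hsub := meeting_subset_of_covers h.right.code slice_subset hcov
  have hle := h.right.five_le_card_meeting (hcov.mono slice_subset) (h.right.update_notMem hw i)
  have := card_le_card hsub
  exact ⟨eq_of_subset_of_card_le hsub (by omega), by omega⟩

theorem opposed_slice (h : TwinFreePair c V W) (hw : w ∈ W) (hs : w i ≠ s) (hcs : w i ≠ c s) :
    Opposed c w i s (slice (meeting c V w) i s) (slice (meeting c V w) i (c s)) :=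
  (h.symm.covers hw).opposed_slice h.left.code hs hcs

theorem slice_apply_nonempty_of_meets (h : TwinFreePair c V W) (hv : v ∈ V) (hw : w ∈ W)
    (hvw : Meets c v w) (hne : w i ≠ v i) : (slice V i (c (v i))).Nonempty := by
  have hopp := h.opposed_slice hw hne (hvw i)
  have hmem : v ∈ slice (meeting c V w) i (v i) := mem_slice.2 ⟨mem_meeting.2 ⟨hv, hvw.symm⟩, rfl⟩
  exact (hopp.agreeOn.nonempty hopp.left_meets ⟨v, hmem⟩).mono
    (filter_subset_filter _ meeting_subset)

end Complement

end TwinFreePair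

section Weight

variable [DecidableEq S]

/-- The number of words of `V` with the letter `s` at `i` plus the number of words of `W` with the
complementary letter there. For equivalent codes it is unchanged by complementing `s` and by
exchanging `V` and `W`. -/
def weight (c : S → S) (V W : Finset (Fin d → S)) (i : Fin d) (s : S) : ℕ :=
  #(slice V i s) + #(slice W i (c s))

namespace TwinFreePair

variable [Finite S] [IsComplementation c]

theorem weight_eq (h : TwinFreePair c V W) (i : Fin d) (s : S) :
    weight c V W i s = #(slice V i (c s)) + #(slice W i s) :=
  card_slice_add_of_equivalent h.left.code h.right.code h.equivalent i s

theorem weight_apply (h : TwinFreePair c V W) (i : Fin d) (s : S) :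
    weight c V W i (c s) = weight c V W i s := by
  rw [h.weight_eq i s, weight, apply_apply (c := c)]

theorem weight_symm (h : TwinFreePair c V W) (i : Fin d) (s : S) :
    weight c W V i s = weight c V W i s := by
  rw [h.weight_eq, weight, add_comm]

theorem sum_weight_le (h : TwinFreePair c V W) (i : Fin d) {R : Finset S}
    (hR : ∀ q ∈ R, ∀ r ∈ R, q ≠ c r) : ∑ r ∈ R, weight c V W i r ≤ #V := by
  have hV := sum_card_slice_add_le V i hR
  have hW := sum_card_slice_add_le W i hR
  have hsum : ∑ r ∈ R, weight c V W i r = ∑ r ∈ R, (#(slice V i (c r)) + #(slice W i r)) :=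
    sum_congr rfl fun r _ => h.weight_eq i r
  have hweight : ∑ r ∈ R, weight c V W i r =
      ∑ r ∈ R, #(slice V i r) + ∑ r ∈ R, #(slice W i (c r)) := sum_add_distrib
  rw [sum_add_distrib] at hV hW hsum
  have := card_eq_of_equivalent h.left.code h.right.code h.equivalent
  omega

theorem weight_add_weight_le (h : TwinFreePair c V W) (i : Fin d) (hqr : q ≠ r) (hqcr : q ≠ c r) :
    weight c V W i q + weight c V W i r ≤ #V := by
  rw [← sum_pair hqr]
  exact h.sum_weight_le i (by simp [ne_apply, hqcr, ne_apply_comm.1 hqcr])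

theorem meeting_eq_slice (h : TwinFreePair c V W) (hv : v ∈ V) (h5 : weight c V W i (v i) ≤ 5)
    (hno : ∀ w ∈ W, Meets c v w → w i = v i) :
    meeting c W v = slice W i (v i) ∧ #(slice W i (v i)) = 5 := by
  have hsub : meeting c W v ⊆ slice W i (v i) := fun w hw =>
    mem_slice.2 ⟨(mem_meeting.1 hw).1, hno w (mem_meeting.1 hw).1 (mem_meeting.1 hw).2⟩
  have hle := h.right.five_le_card_meeting (h.covers hv) (h.notMem hv)
  have := card_le_card hsub
  rw [h.weight_eq] at h5
  exact ⟨eq_of_subset_of_card_le hsub (by omega), by omega⟩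

theorem eq_of_forall_meets_apply_eq (h : TwinFreePair c V W) (hv : v ∈ V)
    (h5 : weight c V W i (v i) ≤ 5) (hno : ∀ w ∈ W, Meets c v w → w i = v i) (hu : u ∈ V)
    (hui : u i = v i) : u = v := by
  obtain ⟨hmeeting, hcard⟩ := h.meeting_eq_slice hv h5 hno
  have hempty : ¬(slice V i (c (u i))).Nonempty := by
    rw [h.weight_eq] at h5
    rw [not_nonempty_iff_eq_empty, ← card_eq_zero, hui]
    omega
  have hmeeting' := (h.meeting_eq_slice hu (hui ▸ h5) fun w hw huw => by
    by_contra hne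
    exact hempty (h.slice_apply_nonempty_of_meets hu hw huw hne)).1
  have hmeets : Meets c v u := h.right.meets_of_meeting_subset (h.covers hv)
    (by rw [hmeeting, hcard]) (by rw [hmeeting, hmeeting', hui])
  exact (eq_of_meets h.left.code hv hu hmeets).symm

theorem exists_meets_apply_ne (h : TwinFreePair c V W) (hv : v ∈ V)
    (h5 : weight c V W i (v i) ≤ 5) : ∃ w ∈ W, Meets c v w ∧ w i ≠ v i := by
  by_contra! hno
  obtain ⟨hmeeting, hcard⟩ := h.meeting_eq_slice hv h5 hno
  have heq := h.weight_eq i (v i)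
  have hempty : slice V i (c (v i)) = ∅ := card_eq_zero.1 (by omega)
  have hone : #(slice V i (v i)) ≤ 1 := by
    rw [← card_singleton v]
    exact card_le_card fun u hu => mem_singleton.2
      (h.eq_of_forall_meets_apply_eq hv h5 hno (mem_slice.1 hu).1 (mem_slice.1 hu).2)
  obtain ⟨w, hw⟩ : (slice W i (c (v i))).Nonempty :=
    card_pos.1 (by rw [weight] at heq; omega)
  obtain ⟨hw, hwi⟩ := mem_slice.1 hw
  have hcwi : c (w i) = v i := by rw [hwi, apply_apply (c := c)]
  have hV : ∀ u ∈ V, u i ≠ w i := fun u hu hui =>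
    notMem_empty u (hempty ▸ mem_slice.2 ⟨hu, hui.trans hwi⟩)
  have hmeeting' := (h.meeting_update_eq_slice hw hV (by rw [hcwi, hcard])).1
  have hmeets : Meets c v (update w i (c (w i))) := h.right.meets_of_meeting_subset
    (h.covers hv) (by rw [hmeeting, hcard]) (by rw [hmeeting, hmeeting', hcwi])
  obtain ⟨B, hBv, hBw⟩ := hmeets.exists_mem_realize
  obtain ⟨u, hu, hui, hBu, -⟩ := h.exists_mem_of_mem_realize_update hw hV hBw
  rw [eq_of_mem_realize h.left.code hu hv hBu hBv] at hui
  exact hui hcwi.symm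

theorem slice_apply_nonempty (h : TwinFreePair c V W) (h5 : weight c V W i s ≤ 5)
    (hne : (slice V i s).Nonempty) : (slice V i (c s)).Nonempty := by
  obtain ⟨v, hvs⟩ := hne
  obtain ⟨hv, rfl⟩ := mem_slice.1 hvs
  obtain ⟨w, hw, hvw, hwv⟩ := h.exists_meets_apply_ne hv h5
  exact h.slice_apply_nonempty_of_meets hv hw hvw hwv

theorem two_le_card_slice_of_nonempty (h : TwinFreePair c V W) (h5 : weight c V W i s ≤ 5)
    (hne : (slice V i s).Nonempty) : 2 ≤ #(slice V i s) := by
  by_contra! hlt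
  have hpos := hne.card_pos
  obtain ⟨v, hvs⟩ := hne
  obtain ⟨hv, rfl⟩ := mem_slice.1 hvs
  obtain ⟨w, hw, hvw, hwv⟩ := h.exists_meets_apply_ne hv h5
  have hsub {s : S} : slice (meeting c V w) i s ⊆ slice V i s :=
    filter_subset_filter _ meeting_subset
  have hmem : v ∈ slice (meeting c V w) i (v i) := mem_slice.2 ⟨mem_meeting.2 ⟨hv, hvw.symm⟩, rfl⟩
  have hle := card_le_card (hsub (s := v i))
  have hle' := card_le_card (hsub (s := c (v i)))
  have := (h.opposed_slice hw hwv (hvw i)).five_le_card_right h.left (hsub.trans slice_subset)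
    (hsub.trans slice_subset) (by have := card_pos.2 ⟨v, hmem⟩; omega)
  have heq := h.weight_eq i (v i)
  have hW : (slice W i (c (v i))).Nonempty := card_pos.1 (by rw [weight] at heq; omega)
  have hW' := h.symm.slice_apply_nonempty (by rwa [h.weight_symm, h.weight_apply]) hW
  rw [apply_apply (c := c)] at hW'
  have := hW'.card_pos
  omega

theorem slice_eq_empty (h : TwinFreePair c V W) (h5 : weight c V W i s ≤ 5)
    (hV : slice V i s = ∅) (hVc : slice V i (c s) = ∅) : slice W i s = ∅ := by
  by_contra hne
  have heq := h.weight_eq i s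
  have hweight : weight c V W i s = #(slice W i (c s)) := by rw [weight, hV, card_empty, zero_add]
  rw [hVc, card_empty, zero_add] at heq
  have hVi : ∀ v ∈ V, v i ≠ s := fun v hv hvi => notMem_empty v (hV ▸ mem_slice.2 ⟨hv, hvi⟩)
  have hmeeting {w : Fin d → S} (hw : w ∈ slice W i s) :
      meeting c W (update w i (c (w i))) = slice W i (c s) ∧ #(slice W i (c s)) = 5 := by
    obtain ⟨hwW, rfl⟩ := mem_slice.1 hw
    exact h.meeting_update_eq_slice hwW hVi (by omega)
  obtain ⟨w, hw⟩ := nonempty_iff_ne_empty.2 hne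
  obtain ⟨hmw, h5w⟩ := hmeeting hw
  obtain ⟨u, hu, huw⟩ := exists_mem_ne (by omega : 1 < #(slice W i s)) w
  obtain ⟨hmu, -⟩ := hmeeting hu
  obtain ⟨hwW, rfl⟩ := mem_slice.1 hw
  obtain ⟨huW, hui⟩ := mem_slice.1 hu
  have hmeets : Meets c (update w i (c (w i))) (update u i (c (u i))) :=
    h.right.meets_of_meeting_subset ((h.covers_slice_update hwW hVi).mono slice_subset)
      (by rw [hmw, h5w]) (by rw [hmw, hmu])
  refine huw (eq_of_meets h.right.code hwW huW fun t => ?_).symm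
  obtain rfl | ht := eq_or_ne t i
  · exact hui ▸ ne_apply _
  · simpa only [update_of_ne ht] using hmeets t

theorem two_le_card_slices (h : TwinFreePair c V W) (h5 : weight c V W i s ≤ 5)
    (hne : (slice V i s).Nonempty) : 2 ≤ #(slice V i s) ∧ 2 ≤ #(slice V i (c s)) ∧
      2 ≤ #(slice W i s) ∧ 2 ≤ #(slice W i (c s)) := by
  have h5c : weight c V W i (c s) ≤ 5 := by rwa [h.weight_apply]
  have h5W : weight c W V i s ≤ 5 := by rwa [h.weight_symm]
  have h5Wc : weight c W V i (c s) ≤ 5 := by rwa [h.symm.weight_apply]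
  have hW : (slice W i s).Nonempty := by
    by_contra hW
    have hWc : ¬(slice W i (c s)).Nonempty := fun hWc =>
      hW (by simpa only [apply_apply] using h.symm.slice_apply_nonempty h5Wc hWc)
    rw [not_nonempty_iff_eq_empty] at hW hWc
    exact hne.ne_empty (h.symm.slice_eq_empty h5W hW hWc)
  exact ⟨h.two_le_card_slice_of_nonempty h5 hne,
    h.two_le_card_slice_of_nonempty h5c (h.slice_apply_nonempty h5 hne),
    h.symm.two_le_card_slice_of_nonempty h5W hW,
    h.symm.two_le_card_slice_of_nonempty h5Wc (h.symm.slice_apply_nonempty h5W hW)⟩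

theorem four_le_weight (h : TwinFreePair c V W) (hv : v ∈ V) (i : Fin d) :
    4 ≤ weight c V W i (v i) := by
  by_contra! hlt
  have := h.two_le_card_slices (i := i) (by omega) ⟨v, mem_slice.2 ⟨hv, rfl⟩⟩
  rw [weight] at hlt
  omega

theorem six_le_weight (h : TwinFreePair c V W) (h4 : 4 ≤ #(slice V i s)) :
    6 ≤ weight c V W i s := by
  by_contra! hlt
  have := h.two_le_card_slices (i := i) (s := s) (by omega) (card_pos.1 (by omega))
  rw [weight] at hlt
  omega

theorem eq_or_eq_of_four_le_weight (h : TwinFreePair c V W) (h11 : #V ≤ 11)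
    (hq : 4 ≤ weight c V W i q) (hr : 4 ≤ weight c V W i r) (hs : 4 ≤ weight c V W i s)
    (hqr : q ≠ r) (hqcr : q ≠ c r) (hsr : s ≠ r) (hscr : s ≠ c r) : q = s ∨ q = c s := by
  by_contra! hqs
  have hR : ∀ a ∈ ({q, r, s} : Finset S), ∀ b ∈ ({q, r, s} : Finset S), a ≠ c b := by
    simp [ne_apply, hqcr, ne_apply_comm.1 hqcr, hscr, ne_apply_comm.1 hscr, hqs.2,
      ne_apply_comm.1 hqs.2]
  have := h.sum_weight_le i hR
  rw [sum_insert (by simp [hqr, hqs.1]), sum_pair hsr.symm] at this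
  omega

end TwinFreePair

end Weight

end Pairs

section LightPair

theorem length_le_card {α : Type*} {P : Finset α} {L : List α} (hL : L.Nodup)
    (hP : ∀ a ∈ L, a ∈ P) : L.length ≤ #P := by
  classical
  rw [← List.toFinset_card_of_nodup hL]
  exact card_le_card fun a ha => hP a (List.mem_toFinset.1 ha)

variable {S : Type*} {c : S → S} {d : ℕ} {i j t : Fin d} {e s : S}
  {o p q u v w x y : Fin d → S} {B : Fin d → Set S} {V W : Finset (Fin d → S)}

/-- A word `w` of `W` whose box crosses the box of `x`, where `s` is the letter of `x` at `i`, in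
such a way that the letter of `w` at `i` is neither `s` nor its complement. -/
structure Crossing (c : S → S) (W : Finset (Fin d → S)) (i : Fin d) (s : S)
    (x w : Fin d → S) : Prop where
  mem : w ∈ W
  apply_ne : w i ≠ s
  apply_ne_compl : w i ≠ c s
  meets : Meets c x w

variable [DecidableEq S]

/-- The words of `V` meeting `w` with the complement of the letter `s` at `i`. -/
def mates (c : S → S) (V : Finset (Fin d → S)) (i : Fin d) (s : S) (w : Fin d → S) :
    Finset (Fin d → S) :=
  slice (meeting c V w) i (c s)

theorem mem_mates : p ∈ mates c V i s w ↔ p ∈ V ∧ Meets c w p ∧ p i = c s := by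
  rw [mates, mem_slice, mem_meeting, and_assoc]

theorem mates_subset : mates c V i s w ⊆ V :=
  slice_subset.trans meeting_subset

theorem mates_subset_slice : mates c V i s w ⊆ slice V i (c s) :=
  filter_subset_filter _ meeting_subset

/-- The smallest slices a twin-free pair could have when `#V ≤ 11`: the letter `s` at `i` has
weight at most five, and `x` and `y`, complementary at `j`, are the only words of `V` that
carry it. -/
structure LightPair (c : S → S) (V W : Finset (Fin d → S)) (i j : Fin d) (s : S)
    (x y : Fin d → S) : Prop where
  pair : TwinFreePair c V W
  card_le : #V ≤ 11
  weight_le : weight c V W i s ≤ 5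
  left_mem : x ∈ V
  right_mem : y ∈ V
  left_apply : x i = s
  right_apply : y i = s
  eq_or_eq : ∀ v ∈ V, v i = s → v = x ∨ v = y
  right_compl : y j = c (x j)
  card_slice_le : #(slice V i (c s)) ≤ 3

namespace LightPair

theorem card_mates_le (h : LightPair c V W i j s x y) (w : Fin d → S) :
    #(mates c V i s w) ≤ 3 :=
  (card_le_card mates_subset_slice).trans h.card_slice_le

theorem eq_or_eq_or_eq (h : LightPair c V W i j s x y) (ho : o ∈ slice V i (c s))
    (hp : p ∈ slice V i (c s)) (hq : q ∈ slice V i (c s)) (hop : o ≠ p) (hoq : o ≠ q)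
    (hpq : p ≠ q) (hu : u ∈ slice V i (c s)) : u = o ∨ u = p ∨ u = q := by
  by_contra! hne
  have := length_le_card (P := slice V i (c s)) (L := [u, o, p, q])
    (by simp [hne, hop, hoq, hpq]) (by simp [hu, ho, hp, hq])
  exact absurd (this.trans h.card_slice_le) (by simp)

theorem crossing_apply_ne_right (h : LightPair c V W i j s x y) (hw : Crossing c W i s x w) :
    w j ≠ y j :=
  h.right_compl ▸ hw.meets j

variable [IsComplementation c]

theorem left_compl (h : LightPair c V W i j s x y) : x j = c (y j) := by
  rw [h.right_compl, apply_apply (c := c)]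

theorem symm (h : LightPair c V W i j s x y) : LightPair c V W i j s y x where
  pair := h.pair
  card_le := h.card_le
  weight_le := h.weight_le
  left_mem := h.right_mem
  right_mem := h.left_mem
  left_apply := h.right_apply
  right_apply := h.left_apply
  eq_or_eq v hv hvi := (h.eq_or_eq v hv hvi).symm
  right_compl := h.left_compl
  card_slice_le := h.card_slice_le

theorem apply_ne (h : LightPair c V W i j s x y) : x j ≠ y j :=
  h.right_compl ▸ ne_apply (x j)

theorem ne (h : LightPair c V W i j s x y) : i ≠ j := by
  rintro rfl
  exact h.apply_ne (h.left_apply.trans h.right_apply.symm)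

theorem exists_apply_ne (h : LightPair c V W i j s x y) :
    ∃ t ∈ ({i, j}ᶜ : Set (Fin d)), x t ≠ y t := by
  by_contra! heq
  refine h.apply_ne (congrFun (h.pair.left.eq_of_forall_ne (i := j) h.left_mem h.right_mem
    fun t htj => ?_) j)
  obtain rfl | hti := eq_or_ne t i
  · rw [h.left_apply, h.right_apply]
  · exact heq t (by simp [hti, htj])

theorem opposed (h : LightPair c V W i j s x y) (hw : Crossing c W i s x w) :
    Opposed c w i s (slice (meeting c V w) i s) (mates c V i s w) :=
  h.pair.opposed_slice hw.mem hw.apply_ne hw.apply_ne_compl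

theorem two_le_card (h : LightPair c V W i j s x y) (hw : Crossing c W i s x w) :
    2 ≤ #(slice (meeting c V w) i s) ∧ 2 ≤ #(mates c V i s w) := by
  refine (h.opposed hw).two_le_card h.pair.left (slice_subset.trans meeting_subset) mates_subset
    ⟨x, mem_slice.2 ⟨mem_meeting.2 ⟨h.left_mem, hw.meets.symm⟩, h.left_apply⟩⟩ ?_
  have hsub : slice (meeting c V w) i s ⊆ {x, y} := fun v hv => by
    simpa using h.eq_or_eq v (meeting_subset (slice_subset hv)) (mem_slice.1 hv).2
  have := (card_le_card hsub).trans card_le_two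
  have := h.card_mates_le w
  omega

theorem right_meets (h : LightPair c V W i j s x y) (hw : Crossing c W i s x w) :
    Meets c y w := by
  obtain ⟨v, hv, hvx⟩ := exists_mem_ne (h.two_le_card hw).1 x
  obtain ⟨hvm, hvi⟩ := mem_slice.1 hv
  obtain ⟨hvV, hwv⟩ := mem_meeting.1 hvm
  exact ((h.eq_or_eq v hvV hvi).resolve_left hvx) ▸ hwv.symm

theorem crossing_right (h : LightPair c V W i j s x y) (hw : Crossing c W i s x w) :
    Crossing c W i s y w :=
  ⟨hw.mem, hw.apply_ne, hw.apply_ne_compl, h.right_meets hw⟩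

theorem crossing_apply_ne_left (h : LightPair c V W i j s x y) (hw : Crossing c W i s x w) :
    w j ≠ x j :=
  h.symm.crossing_apply_ne_right (h.crossing_right hw)

theorem agreeOn_mates (h : LightPair c V W i j s x y) (hw : Crossing c W i s x w) :
    AgreeOn c {i}ᶜ w {x, y} (mates c V i s w) := by
  have heq : slice (meeting c V w) i s = {x, y} := by
    ext v
    rw [mem_slice, mem_meeting, mem_insert, mem_singleton]
    constructor
    · exact fun hv => h.eq_or_eq v hv.1.1 hv.2
    · rintro (rfl | rfl)
      · exact ⟨⟨h.left_mem, hw.meets.symm⟩, h.left_apply⟩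
      · exact ⟨⟨h.right_mem, (h.right_meets hw).symm⟩, h.right_apply⟩
  exact heq ▸ (h.opposed hw).agreeOn

theorem swapAt_mem_realize_mate (h : LightPair c V W i j s x y) (hw : Crossing c W i s x w)
    (hwe : w j ≠ e) (hwce : w j ≠ c e) (hxe : x j ≠ e) (hxce : x j ≠ c e)
    (hB : B ∈ realize c w) (hp : p ∈ mates c V i s w) (hBp : B ∈ realize c p) :
    ∃ q ∈ mates c V i s w, swapAt c j e B ∈ realize c q := by
  have hye : y j ≠ e := fun hye => hxce (hye ▸ h.left_compl)
  have hyce : y j ≠ c e := fun hyce => hxe (by rw [h.left_compl, hyce, apply_apply (c := c)])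
  have hBw := realize_subset_cyl {i}ᶜ w hB
  obtain ⟨v, hv, hBv⟩ := (h.agreeOn_mates hw B hBw).2 ⟨p, hp, realize_subset_cyl _ p hBp⟩
  have hvj : v j ≠ e ∧ v j ≠ c e := by
    obtain rfl | hvy := mem_insert.1 hv
    · exact ⟨hxe, hxce⟩
    · exact mem_singleton.1 hvy ▸ ⟨hye, hyce⟩
  obtain ⟨q, hq, hBq⟩ := (h.agreeOn_mates hw _ ((swapAt_mem_cyl_of_ne hwe hwce).2 hBw)).1
    ⟨v, hv, (swapAt_mem_cyl_of_ne hvj.1 hvj.2).2 hBv⟩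
  refine ⟨q, hq, (mem_realize_iff i).2 ⟨?_, hBq⟩⟩
  rw [swapAt, update_of_ne h.ne, (mem_mates.1 hq).2.2, ← (mem_mates.1 hp).2.2]
  exact hBp i

theorem mate_apply (h : LightPair c V W i j s x y) (hw : Crossing c W i s x w)
    (hp : p ∈ mates c V i s w) : p j = x j ∨ p j = y j ∨ p j = w j := by
  by_contra! hpj
  obtain ⟨hpx, hpy, hpw⟩ := hpj
  have hxcp : x j ≠ c (p j) := ne_apply_comm.1 (h.right_compl ▸ hpy)
  have hopp := opposed_slice (i := j) (r := p j) (h.pair.left.mono mates_subset).code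
    (fun q hq => (mem_mates.1 hq).2.1) fun B hB ⟨q, hq, hBq⟩ =>
      h.swapAt_mem_realize_mate hw hpw.symm (ne_apply_comm.1 ((mem_mates.1 hp).2.1 j)) hpx.symm
        hxcp hB hq hBq
  have := hopp.four_le_card_add_card h.pair.left (slice_subset.trans mates_subset)
    (slice_subset.trans mates_subset) ⟨p, mem_slice.2 ⟨hp, rfl⟩⟩
  have := card_slice_add_card_slice_le (mates c V i s w) j (ne_apply (c := c) (p j))
  have := h.card_mates_le w
  omega

/- Otherwise the mates of `w` with the letter of `x` at `j` would fill the face of `x` opposite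
at `i`, which takes five words. -/
theorem exists_mate_apply_eq (h : LightPair c V W i j s x y) (hw : Crossing c W i s x w) :
    ∃ p ∈ mates c V i s w, p j = w j := by
  by_contra! hno
  have hj : j ∈ ({i}ᶜ : Set (Fin d)) := h.ne.symm
  have hagree : AgreeOn c {i}ᶜ w {x} (slice (mates c V i s w) j (x j)) := by
    intro B hB
    constructor
    · rintro ⟨v, hv, hBx⟩
      obtain rfl := mem_singleton.1 hv
      obtain ⟨q, hq, hBq⟩ := (h.agreeOn_mates hw B hB).1 ⟨v, mem_insert_self .., hBx⟩
      refine ⟨q, mem_slice.2 ⟨hq, (h.mate_apply hw hq).resolve_right ?_⟩, hBq⟩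
      rintro (hqj | hqj)
      · exact notMem_Eltr_apply (hBx j hj) (h.right_compl ▸ hqj ▸ hBq j hj)
      · exact hno q hq hqj
    · rintro ⟨q, hq, hBq⟩
      obtain ⟨hqm, hqj⟩ := mem_slice.1 hq
      obtain ⟨v, hv, hBv⟩ := (h.agreeOn_mates hw B hB).2 ⟨q, hqm, hBq⟩
      obtain hvx | hvy := mem_insert.1 hv
      · exact ⟨v, mem_singleton.2 hvx, hBv⟩
      · obtain rfl := mem_singleton.1 hvy
        have hBqj : B j ∈ Eltr c (q j) := hBq j hj
        have hBvj : B j ∈ Eltr c (v j) := hBv j hj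
        rw [hqj] at hBqj
        rw [h.right_compl] at hBvj
        exact absurd hBvj (notMem_Eltr_apply hBqj)
  have hopp : Opposed c w i s {x} (slice (mates c V i s w) j (x j)) :=
    { left_apply := by simpa using h.left_apply
      right_apply := fun q hq => (mem_mates.1 (slice_subset hq)).2.2
      left_meets := by simpa using hw.meets.symm
      right_meets := fun q hq => (mem_mates.1 (slice_subset hq)).2.1
      agreeOn := hagree }
  have := hopp.five_le_card_right h.pair.left (by simpa using h.left_mem)
    (slice_subset.trans mates_subset) (card_singleton x)
  have := card_le_card (slice_subset (V := mates c V i s w) (i := j) (s := x j))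
  have := h.card_mates_le w
  omega

theorem agreeOn_left (h : LightPair c V W i j s x y) (hw : Crossing c W i s x w) :
    AgreeOn c {i, j}ᶜ w {x} {p ∈ mates c V i s w | p j ≠ y j} := by
  intro B hB
  obtain ⟨F, hFx, hFw⟩ := exists_mem_Eltr₂ (hw.meets j)
  have hFy : F ∉ Eltr c (y j) := h.right_compl ▸ notMem_Eltr_apply hFx
  have hmem {v : Fin d → S} :
      update B j F ∈ cyl c {i}ᶜ v ↔ F ∈ Eltr c (v j) ∧ B ∈ cyl c {i, j}ᶜ v :=
    update_mem_cyl_compl_singleton h.ne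
  have hagree := h.agreeOn_mates hw (update B j F) (hmem.2 ⟨hFw, hB⟩)
  simp only [hmem, exists_mem_insert, hFx, true_and, mem_singleton, exists_eq_left, hFy,
    false_and, or_false] at hagree
  simp only [mem_singleton, exists_eq_left, hagree, mem_filter]
  refine exists_congr fun p => ?_
  rw [and_assoc]
  refine and_congr_right fun hp => and_congr_left fun _ => ⟨fun hF hpj => hFy (hpj ▸ hF), ?_⟩
  intro hpj
  obtain hpx | hpw := (h.mate_apply hw hp).imp_right (Or.resolve_left · hpj)
  · rwa [hpx]
  · rwa [hpw]

end LightPair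

end LightPair

section Mates

variable {S : Type*} [DecidableEq S] {c : S → S} [IsComplementation c] {d : ℕ}
  {i j t : Fin d} {s : S} {o p q w x y : Fin d → S} {V W : Finset (Fin d → S)}

namespace LightPair

theorem exists_compl_of_ne (h : LightPair c V W i j s x y) (hw : Crossing c W i s x w)
    (hp : p ∈ mates c V i s w) (hq : q ∈ mates c V i s w) (hpq : p ≠ q) (hpj : p j ≠ y j)
    (hqj : q j ≠ y j) : ∃ l ∈ ({i, j}ᶜ : Set (Fin d)), q l = c (p l) := by
  obtain ⟨l, hl⟩ := h.pair.left.code p (mates_subset hp) q (mates_subset hq) hpq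
  refine ⟨l, ?_, hl⟩
  rintro (rfl | rfl)
  · rw [(mem_mates.1 hp).2.2, (mem_mates.1 hq).2.2] at hl
    exact ne_apply _ hl
  · rcases (h.mate_apply hw hp).imp_right (Or.resolve_left · hpj) with hpx | hpw
    · exact hqj (by rw [hl, hpx, h.right_compl])
    · exact (mem_mates.1 hq).2.1 l (hpw ▸ hl)

theorem left_eqOn_of_unique (h : LightPair c V W i j s x y) (hw : Crossing c W i s x w)
    (ho : o ∈ mates c V i s w) (hoj : o j ≠ y j)
    (hunique : ∀ p ∈ mates c V i s w, p j ≠ y j → p = o) (ht : t ∈ ({i, j}ᶜ : Set (Fin d))) :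
    x t = o t := by
  have heq : {p ∈ mates c V i s w | p j ≠ y j} = {o} :=
    eq_singleton_iff_unique_mem.2 ⟨mem_filter.2 ⟨ho, hoj⟩, fun p hp =>
      hunique p (mem_filter.1 hp).1 (mem_filter.1 hp).2⟩
  exact (heq ▸ h.agreeOn_left hw).singleton_eqOn hw.meets.symm (mem_mates.1 ho).2.1 ht

theorem exists_eqOn_of_pair (h : LightPair c V W i j s x y) (hw : Crossing c W i s x w)
    (hp : p ∈ mates c V i s w) (hq : q ∈ mates c V i s w) (hpq : p ≠ q) (hpj : p j ≠ y j)
    (hqj : q j ≠ y j) (hall : ∀ u ∈ mates c V i s w, u j ≠ y j → u = p ∨ u = q) :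
    ∃ l ∈ ({i, j}ᶜ : Set (Fin d)), q l = c (p l) ∧ x l = w l ∧
      ∀ t ∈ ({i, j}ᶜ : Set (Fin d)), t ≠ l → p t = x t ∧ q t = x t := by
  obtain ⟨l, hl, hlpq⟩ := h.exists_compl_of_ne hw hp hq hpq hpj hqj
  have heq : {u ∈ mates c V i s w | u j ≠ y j} = {p, q} := by
    ext u
    rw [mem_filter, mem_insert, mem_singleton]
    constructor
    · exact fun hu => hall u hu.1 hu.2
    · rintro (rfl | rfl)
      · exact ⟨hp, hpj⟩
      · exact ⟨hq, hqj⟩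
  have hagree : AgreeOn c {i, j}ᶜ w {x} {p, q} := heq ▸ h.agreeOn_left hw
  have hwp := (mem_mates.1 hp).2.1
  have hwq := (mem_mates.1 hq).2.1
  have hlqp : p l = c (q l) := by rw [hlpq, apply_apply (c := c)]
  exact ⟨l, hl, hlpq, hagree.apply_eq_of_compl hwp hwq hl hlpq, fun t ht htl =>
    ⟨hagree.eqOn_of_compl hw.meets.symm hwp hwq hl hlpq ht htl,
      (pair_comm p q ▸ hagree).eqOn_of_compl hw.meets.symm hwq hwp hl hlqp ht htl⟩⟩

variable {w₁ w₂ o₁ o₂ : Fin d → S}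

theorem eq_of_unique (h : LightPair c V W i j s x y) (hw₁ : Crossing c W i s x w₁)
    (hw₂ : Crossing c W i s x w₂) (ho₁ : o₁ ∈ mates c V i s w₁) (ho₂ : o₂ ∈ mates c V i s w₂)
    (ho₁j : o₁ j ≠ y j) (ho₂j : o₂ j ≠ y j)
    (hunique₁ : ∀ p ∈ mates c V i s w₁, p j ≠ y j → p = o₁)
    (hunique₂ : ∀ p ∈ mates c V i s w₂, p j ≠ y j → p = o₂) : o₁ = o₂ := by
  refine h.pair.left.eq_of_forall_ne (i := j) (mates_subset ho₁) (mates_subset ho₂) fun t htj => ?_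
  obtain rfl | hti := eq_or_ne t i
  · rw [(mem_mates.1 ho₁).2.2, (mem_mates.1 ho₂).2.2]
  · have ht : t ∈ ({i, j}ᶜ : Set (Fin d)) := by simp [hti, htj]
    rw [← h.left_eqOn_of_unique hw₁ ho₁ ho₁j hunique₁ ht,
      ← h.left_eqOn_of_unique hw₂ ho₂ ho₂j hunique₂ ht]

theorem notMem_mates (h : LightPair c V W i j s x y) (hw₁ : Crossing c W i s x w₁)
    (hw₂ : Crossing c W i s x w₂) (hne : w₁ j ≠ w₂ j) (ho : o j = w₁ j) :
    o ∉ mates c V i s w₂ := by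
  intro hmem
  have hxyw := h.mate_apply hw₂ hmem
  rw [ho] at hxyw
  exact hne ((hxyw.resolve_left (h.crossing_apply_ne_left hw₁)).resolve_left
    (h.crossing_apply_ne_right hw₁))

/- If `w₁` and `w₂` differed at `j`, there would be just one mate `b` besides their own mates `o₁`
and `o₂` with the letter of `w₁` and `w₂` at `j`, and `b` would be a mate of both. -/
theorem crossing_apply_eq (h : LightPair c V W i j s x y) (hw₁ : Crossing c W i s x w₁)
    (hw₂ : Crossing c W i s x w₂) : w₁ j = w₂ j := by
  by_contra hne
  obtain ⟨o₁, ho₁, ho₁j⟩ := h.exists_mate_apply_eq hw₁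
  obtain ⟨o₂, ho₂, ho₂j⟩ := h.exists_mate_apply_eq hw₂
  have ho : o₁ ≠ o₂ := ne_of_apply_ne (fun v => v j) (by simpa only [ho₁j, ho₂j])
  have ho₁w := h.notMem_mates hw₁ hw₂ hne ho₁j
  have ho₂w := h.notMem_mates hw₂ hw₁ (Ne.symm hne) ho₂j
  obtain ⟨b, hb, hbo₁⟩ := exists_mem_ne (h.two_le_card hw₁).2 o₁
  have hbo₂ : b ≠ o₂ := fun hbo => ho₂w (hbo ▸ hb)
  have hall : ∀ p ∈ slice V i (c s), p = o₁ ∨ p = o₂ ∨ p = b := fun p =>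
    h.eq_or_eq_or_eq (mates_subset_slice ho₁) (mates_subset_slice ho₂) (mates_subset_slice hb) ho
      hbo₁.symm hbo₂.symm
  have hall₁ : ∀ p ∈ mates c V i s w₁, p ≠ b → p = o₁ := fun p hp hpb =>
    (hall p (mates_subset_slice hp)).resolve_right
      (not_or.2 ⟨fun hpo => ho₂w (hpo ▸ hp), hpb⟩)
  have hall₂ : ∀ p ∈ mates c V i s w₂, p ≠ b → p = o₂ := fun p hp hpb =>
    ((hall p (mates_subset_slice hp)).resolve_left fun hpo => ho₁w (hpo ▸ hp)).resolve_right hpb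
  have hb₂ : b ∈ mates c V i s w₂ := by
    obtain ⟨b', hb', hb'o⟩ := exists_mem_ne (h.two_le_card hw₂).2 o₂
    exact (not_imp_comm.1 (hall₂ b' hb') hb'o) ▸ hb'
  rcases h.mate_apply hw₁ hb with hbx | hby | hbw
  · have hunique {p : Fin d → S} (hpx : p j ≠ x j) : p ≠ b := fun hpb => hpx (hpb ▸ hbx)
    exact ho (h.symm.eq_of_unique (h.crossing_right hw₁) (h.crossing_right hw₂) ho₁ ho₂
      (ho₁j ▸ h.crossing_apply_ne_left hw₁) (ho₂j ▸ h.crossing_apply_ne_left hw₂)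
      (fun p hp hpx => hall₁ p hp (hunique hpx)) fun p hp hpx => hall₂ p hp (hunique hpx))
  · have hunique {p : Fin d → S} (hpy : p j ≠ y j) : p ≠ b := fun hpb => hpy (hpb ▸ hby)
    exact ho (h.eq_of_unique hw₁ hw₂ ho₁ ho₂
      (ho₁j ▸ h.crossing_apply_ne_right hw₁) (ho₂j ▸ h.crossing_apply_ne_right hw₂)
      (fun p hp hpy => hall₁ p hp (hunique hpy)) fun p hp hpy => hall₂ p hp (hunique hpy))
  · exact h.notMem_mates hw₁ hw₂ hne hbw hb₂

end LightPair

end Mates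

section CrossingWords

variable {S : Type*} {c : S → S} [IsComplementation c] {d : ℕ}
  {i j l m t : Fin d} {e s : S} {p q u v w x y z z' : Fin d → S} {B : Fin d → Set S}
  {V W : Finset (Fin d → S)}

theorem Crossing.of_apply (hw : Crossing c W i s x w) (hu : u ∈ W) (hxu : Meets c x u)
    (hui : u i = w i ∨ u i = c (w i)) : Crossing c W i s x u := by
  rcases hui with hui | hui
  · exact ⟨hu, hui ▸ hw.apply_ne, hui ▸ hw.apply_ne_compl, hxu⟩
  · exact ⟨hu, hui ▸ (ne_apply_comm.1 hw.apply_ne_compl).symm,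
      hui ▸ IsComplementation.involutive.injective.ne hw.apply_ne, hxu⟩

variable [DecidableEq S]

namespace LightPair

theorem crossing_opposed (h : LightPair c V W i j s x y) (hw : Crossing c W i s x w) :
    Opposed c x i (w i) (slice (meeting c W x) i (w i)) (slice (meeting c W x) i (c (w i))) :=
  h.pair.symm.opposed_slice h.left_mem (h.left_apply ▸ hw.apply_ne.symm)
    (h.left_apply ▸ ne_apply_comm.1 hw.apply_ne_compl)

theorem exists_crossing_compl (h : LightPair c V W i j s x y) (hw : Crossing c W i s x w) :
    ∃ w', Crossing c W i s x w' ∧ w' i = c (w i) := by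
  have hopp := h.crossing_opposed hw
  obtain ⟨w', hw'⟩ := hopp.agreeOn.nonempty hopp.left_meets
    ⟨w, mem_slice.2 ⟨mem_meeting.2 ⟨hw.mem, hw.meets⟩, rfl⟩⟩
  obtain ⟨hw'm, hw'i⟩ := mem_slice.1 hw'
  obtain ⟨hw'W, hxw'⟩ := mem_meeting.1 hw'm
  exact ⟨w', hw.of_apply hw'W hxw' (Or.inr hw'i), hw'i⟩

theorem crossing_apply_eq_of_forall (h : LightPair c V W i j s x y) (hw : Crossing c W i s x w)
    (hall : ∀ u, Crossing c W i s x u → u i = w i → u t = e) (hti : t ≠ i) (hxt : e ≠ x t)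
    (hu : Crossing c W i s x u) (hui : u i = c (w i)) : u t = e := by
  refine ((hu.meets.eq_or_eq_of_forall_mem fun B hBx hBu => ?_).resolve_left hxt).symm
  obtain ⟨v, hv, hBv⟩ := ((h.crossing_opposed hw).agreeOn B (realize_subset_cyl _ x hBx)).2
    ⟨u, mem_slice.2 ⟨mem_meeting.2 ⟨hu.mem, hu.meets⟩, hui⟩, realize_subset_cyl _ u hBu⟩
  obtain ⟨hvm, hvi⟩ := mem_slice.1 hv
  obtain ⟨hvW, hxv⟩ := mem_meeting.1 hvm
  exact hall v (hw.of_apply hvW hxv (Or.inl hvi)) hvi ▸ (hBv t hti).2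

variable [Finite S]

theorem exists_crossing (h : LightPair c V W i j s x y) : ∃ w, Crossing c W i s x w := by
  obtain ⟨w, hw, hxw, hwi⟩ := h.pair.exists_meets_apply_ne h.left_mem
    (h.left_apply ▸ h.weight_le)
  exact ⟨w, hw, h.left_apply ▸ hwi, h.left_apply ▸ hxw i, hxw⟩

theorem six_le_weight_of_forall_crossing (h : LightPair c V W i j s x y)
    (hw : Crossing c W i s x w)
    (hall : ∀ u, Crossing c W i s x u → u i = w i ∨ u i = c (w i) → u t = e) :
    6 ≤ weight c V W t e := by
  rw [← h.pair.weight_symm]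
  refine h.pair.symm.six_le_weight ?_
  have hsub {r : S} : slice (meeting c W x) i r ⊆ W := slice_subset.trans meeting_subset
  calc 4 ≤ #(slice (meeting c W x) i (w i)) + #(slice (meeting c W x) i (c (w i))) :=
        (h.crossing_opposed hw).four_le_card_add_card h.pair.right hsub hsub
          ⟨w, mem_slice.2 ⟨mem_meeting.2 ⟨hw.mem, hw.meets⟩, rfl⟩⟩
    _ = #{u ∈ meeting c W x | u i = w i ∨ u i = c (w i)} :=
        card_slice_add_card_slice _ i (ne_apply (w i))
    _ ≤ #(slice W t e) := card_le_card fun u hu => by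
        obtain ⟨hum, hui⟩ := mem_filter.1 hu
        obtain ⟨huW, hxu⟩ := mem_meeting.1 hum
        exact mem_slice.2 ⟨huW, hall u (hw.of_apply huW hxu hui) hui⟩

theorem card_slice_left_le (h : LightPair c V W i j s x y) : #(slice V j (x j)) ≤ 3 := by
  obtain ⟨w, hw⟩ := h.exists_crossing
  have h6 : 6 ≤ weight c V W j (w j) :=
    h.six_le_weight_of_forall_crossing hw fun u hu _ => h.crossing_apply_eq hu hw
  have hsum := h.pair.weight_add_weight_le j (h.crossing_apply_ne_left hw) (hw.meets j)
  have h11 := h.card_le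
  have h2 := h.pair.two_le_card_slices (i := j) (s := x j) (by omega)
    ⟨x, mem_slice.2 ⟨h.left_mem, rfl⟩⟩
  have hdef : weight c V W j (x j) = #(slice V j (x j)) + #(slice W j (c (x j))) := rfl
  omega

theorem apply_eq_crossing (h : LightPair c V W i j s x y) (hw : Crossing c W i s x w)
    (hv : v ∈ V) (hvs : v i ≠ s) (hvcs : v i ≠ c s) : v i = w i ∨ v i = c (w i) := by
  refine h.pair.eq_or_eq_of_four_le_weight h.card_le (h.pair.four_le_weight hv i)
    (h.left_apply ▸ h.pair.four_le_weight h.left_mem i) ?_ hvs hvcs hw.apply_ne hw.apply_ne_compl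
  rw [← h.pair.weight_symm]
  exact h.pair.symm.four_le_weight hw.mem i

/- A point over `B` that lies in the boxes of `w` and `y` moves, when reflected at `j`, to a point
which is still in the box of `w`, hence is covered by a word `v` of `V`. -/
theorem exists_mem_of_notMem_cyl (h : LightPair c V W i j s x y) (hw : Crossing c W i s x w)
    (hBw : B ∈ cyl c {i, j}ᶜ w) (hBy : B ∈ cyl c {i, j}ᶜ y) (hBx : B ∉ cyl c {i, j}ᶜ x) :
    ∃ v ∈ V, v j = x j ∧ v i = w i ∧ B ∈ cyl c {i, j}ᶜ v := by
  obtain ⟨E, hEs, hEw⟩ := exists_mem_Eltr₂ hw.apply_ne_compl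
  obtain ⟨F, hFy, hFw⟩ := exists_mem_Eltr₂ (h.right_meets hw j)
  have hAw := (update_update_mem_realize h.ne).2 ⟨hEw, hFw, hBw⟩
  have hAy := (update_update_mem_realize h.ne).2 ⟨h.right_apply.symm ▸ hEs, hFy, hBy⟩
  obtain ⟨v, hv, hAv⟩ := (h.pair.symm.covers hw.mem).exists_mem
    ((swapAt_mem_realize_of_ne (h.crossing_apply_ne_right hw) (h.right_meets hw j)).2 hAw)
  have hvj : v j = x j := h.left_compl ▸
    apply_of_swapAt_mem_realize h.pair.left.code h.right_mem hv hAy hAv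
  rw [swapAt, update_idem, update_update_mem_realize h.ne] at hAv
  obtain ⟨hEv, -, hBv⟩ := hAv
  have hvs : v i ≠ s := by
    intro hvs
    obtain rfl | rfl := h.eq_or_eq v hv hvs
    · exact hBx hBv
    · exact h.apply_ne hvj.symm
  have hvcs : v i ≠ c s := fun hvcs => notMem_Eltr_apply hEs (hvcs ▸ hEv)
  refine ⟨v, hv, hvj, (h.apply_eq_crossing hw hv hvs hvcs).resolve_right fun hvw => ?_, hBv⟩
  exact notMem_Eltr_apply hEw (hvw ▸ hEv)

theorem exists_mem_of_apply_ne (h : LightPair c V W i j s x y) (hw : Crossing c W i s x w)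
    (ht : t ∈ ({i, j}ᶜ : Set (Fin d))) (hxw : x t ≠ w t) (hxy : x t ≠ y t) :
    ∃ v ∈ V, v j = x j ∧ v i = w i := by
  obtain ⟨B, hBw, hBy, hBx⟩ := (h.right_meets hw).symm.exists_notMem_cyl ht hxw hxy
  obtain ⟨v, hv, hvj, hvi, -⟩ := h.exists_mem_of_notMem_cyl hw hBw hBy hBx
  exact ⟨v, hv, hvj, hvi⟩

theorem apply_ne_left_of_mem (h : LightPair c V W i j s x y) (hw : Crossing c W i s x w)
    (hz : z ∈ V) (hzj : z j = x j) (hzi : z i = w i) (hz' : z' ∈ V) (hz'j : z' j = x j)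
    (hz'i : z' i = c (w i)) (hp : p ∈ V) (hpi : p i = c s) : p j ≠ x j := by
  intro hpj
  have hnodup : [x, p, z, z'].Nodup := by
    refine List.Nodup.of_map (fun v => v i) ?_
    simp [h.left_apply, hpi, hzi, hz'i, ne_apply, hw.apply_ne.symm, hw.apply_ne_compl.symm,
      ne_apply_comm.1 hw.apply_ne_compl, IsComplementation.involutive.injective.ne hw.apply_ne.symm]
  have := length_le_card (P := slice V j (x j)) hnodup
    (by simp [mem_slice, h.left_mem, hp, hpj, hz, hzj, hz', hz'j])
  exact absurd (this.trans h.card_slice_left_le) (by simp)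

theorem apply_ne_left_or_apply_ne_right (h : LightPair c V W i j s x y)
    (hw : Crossing c W i s x w) (hl : l ∈ ({i, j}ᶜ : Set (Fin d))) (hylw : y l ≠ w l)
    (hylx : y l ≠ x l) (hm : m ∈ ({i, j}ᶜ : Set (Fin d))) (hxmw : x m ≠ w m) (hxmy : x m ≠ y m)
    (hp : p ∈ V) (hpi : p i = c s) (hq : q ∈ V) (hqi : q i = c s) : p j ≠ x j ∨ q j ≠ y j := by
  obtain ⟨w', hw', hw'i⟩ := h.exists_crossing_compl hw
  by_cases hxw' : x m = w' m
  · right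
    obtain ⟨z, hz, hzj, hzi⟩ := h.symm.exists_mem_of_apply_ne (h.crossing_right hw) hl hylw hylx
    obtain ⟨z', hz', hz'j, hz'i⟩ := h.symm.exists_mem_of_apply_ne (h.crossing_right hw') hm
      (hxw' ▸ hxmy.symm) hxmy.symm
    exact h.symm.apply_ne_left_of_mem (h.crossing_right hw) hz hzj hzi hz' hz'j
      (hz'i.trans hw'i) hq hqi
  · left
    obtain ⟨z, hz, hzj, hzi⟩ := h.exists_mem_of_apply_ne hw hm hxmw hxmy
    obtain ⟨z', hz', hz'j, hz'i⟩ := h.exists_mem_of_apply_ne hw' hm hxw' hxmy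
    exact h.apply_ne_left_of_mem hw hz hzj hzi hz' hz'j (hz'i.trans hw'i) hp hpi

theorem mates_apply_ne_left_or_right (h : LightPair c V W i j s x y)
    (hw : Crossing c W i s x w) :
    (∀ p ∈ mates c V i s w, p j ≠ x j) ∨ ∀ p ∈ mates c V i s w, p j ≠ y j := by
  by_contra! hcon
  obtain ⟨⟨p, hp, hpj⟩, q, hq, hqj⟩ := hcon
  obtain ⟨o, ho, hoj⟩ := h.exists_mate_apply_eq hw
  have hox : o j ≠ x j := hoj ▸ h.crossing_apply_ne_left hw
  have hoy : o j ≠ y j := hoj ▸ h.crossing_apply_ne_right hw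
  have hpy : p j ≠ y j := hpj ▸ h.apply_ne
  have hqx : q j ≠ x j := hqj ▸ h.apply_ne.symm
  have hpo : p ≠ o := ne_of_apply_ne (fun v => v j) (by simpa only [hpj] using hox.symm)
  have hqo : q ≠ o := ne_of_apply_ne (fun v => v j) (by simpa only [hqj] using hoy.symm)
  have hpq : p ≠ q := ne_of_apply_ne (fun v => v j) (by simpa only [hpj] using hqx.symm)
  have hall : ∀ u ∈ mates c V i s w, u = p ∨ u = q ∨ u = o := fun u hu =>
    h.eq_or_eq_or_eq (mates_subset_slice hp) (mates_subset_slice hq) (mates_subset_slice ho)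
      hpq hpo hqo (mates_subset_slice hu)
  obtain ⟨l, hl, hlo, hxl, hox'⟩ := h.exists_eqOn_of_pair hw hp ho hpo hpy hoy fun u hu huy =>
    (hall u hu).imp_right (Or.resolve_left · (ne_of_apply_ne (fun v => v j) (hqj ▸ huy)))
  obtain ⟨m, hm, hmo, hym, hoy'⟩ := h.symm.exists_eqOn_of_pair (h.crossing_right hw) hq ho hqo hqx
    hox fun u hu hux => (hall u hu).resolve_left (ne_of_apply_ne (fun v => v j) (hpj ▸ hux))
  obtain rfl | hlm := eq_or_ne l m
  · obtain ⟨t, ht, hxy⟩ := h.exists_apply_ne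
    obtain rfl | htl := eq_or_ne t l
    · exact hxy (hxl.trans hym.symm)
    · exact hxy ((hox' t ht htl).2.symm.trans (hoy' t ht htl).2)
  have hxm : x m ≠ w m := fun hxm => (mem_mates.1 hq).2.1.symm m
    (by rw [← hmo, (hox' m hm hlm.symm).2, hxm])
  have hyl : y l ≠ w l := fun hyl => (mem_mates.1 hp).2.1.symm l
    (by rw [← hlo, (hoy' l hl hlm).2, hyl])
  exact (h.apply_ne_left_or_apply_ne_right hw hl hyl (hxl ▸ hyl) hm hxm (hym ▸ hxm)
    (mates_subset hp) (mem_mates.1 hp).2.2 (mates_subset hq) (mem_mates.1 hq).2.2).elim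
    (· hpj) (· hqj)

end LightPair

end CrossingWords

section OneSided

variable {S : Type*} [DecidableEq S] {c : S → S} [IsComplementation c] {d : ℕ}
  {i j l t : Fin d} {e s : S} {o p u v w w' x y z : Fin d → S} {V W : Finset (Fin d → S)}

namespace LightPair

theorem exists_mate_apply_eq_right (h : LightPair c V W i j s x y) (hw : Crossing c W i s x w)
    (hmates : ∀ p ∈ mates c V i s w, p j ≠ x j) : ∃ q ∈ mates c V i s w, q j = y j := by
  by_contra! hno
  have hleft : AgreeOn c {i, j}ᶜ w {x} (mates c V i s w) :=
    filter_true_of_mem hno ▸ h.agreeOn_left hw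
  have hright : AgreeOn c {i, j}ᶜ w {y} (mates c V i s w) :=
    filter_true_of_mem hmates ▸ h.symm.agreeOn_left (h.crossing_right hw)
  have hagree : AgreeOn c {i, j}ᶜ w {x} {y} := fun B hB => (hleft B hB).trans (hright B hB).symm
  obtain ⟨t, ht, hxy⟩ := h.exists_apply_ne
  exact hxy (hagree.singleton_eqOn hw.meets.symm (h.right_meets hw).symm ht)

theorem mate_apply_eq_crossing (h : LightPair c V W i j s x y) (hw : Crossing c W i s x w)
    (hmates : ∀ p ∈ mates c V i s w, p j ≠ x j) (hp : p ∈ mates c V i s w) (hpj : p j ≠ y j) :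
    p j = w j :=
  ((h.mate_apply hw hp).resolve_left (hmates p hp)).resolve_left hpj

theorem eq_of_mates_apply_ne (h : LightPair c V W i j s x y) (hw : Crossing c W i s x w)
    (hmates : ∀ p ∈ mates c V i s w, p j ≠ x j) (hp : p ∈ mates c V i s w) (hpj : p j ≠ y j)
    (ho : o ∈ mates c V i s w) (hoj : o j ≠ y j) : p = o := by
  by_contra hpo
  obtain ⟨q, hq, hqj⟩ := h.exists_mate_apply_eq_right hw hmates
  have hall : ∀ u ∈ mates c V i s w, u j ≠ y j → u = p ∨ u = o := fun u hu huj => by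
    have huq : u ≠ q := ne_of_apply_ne (fun v => v j) (hqj ▸ huj)
    rw [← or_iff_left (a := u = p ∨ u = o) huq, or_assoc]
    exact h.eq_or_eq_or_eq (mates_subset_slice hp) (mates_subset_slice ho)
      (mates_subset_slice hq) hpo (ne_of_apply_ne (fun v => v j) (hqj ▸ hpj))
      (ne_of_apply_ne (fun v => v j) (hqj ▸ hoj)) (mates_subset_slice hu)
  obtain ⟨l, -, -, -, heq⟩ := h.exists_eqOn_of_pair hw hp ho hpo hpj hoj hall
  refine hpo (h.pair.left.eq_of_forall_ne (i := l) (mates_subset hp) (mates_subset ho)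
    fun t htl => ?_)
  by_cases ht : t ∈ ({i, j}ᶜ : Set (Fin d))
  · rw [(heq t ht htl).1, (heq t ht htl).2]
  · obtain rfl | rfl := not_not.1 ht
    · rw [(mem_mates.1 hp).2.2, (mem_mates.1 ho).2.2]
    · rw [h.mate_apply_eq_crossing hw hmates hp hpj, h.mate_apply_eq_crossing hw hmates ho hoj]

theorem exists_left_eqOn (h : LightPair c V W i j s x y) (hw : Crossing c W i s x w)
    (hmates : ∀ p ∈ mates c V i s w, p j ≠ x j) :
    ∃ o ∈ mates c V i s w, o j = w j ∧ ∀ t ∈ ({i, j}ᶜ : Set (Fin d)), x t = o t := by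
  obtain ⟨o, ho, hoj⟩ := h.exists_mate_apply_eq hw
  have hoy : o j ≠ y j := hoj ▸ h.crossing_apply_ne_right hw
  exact ⟨o, ho, hoj, fun t ht => h.left_eqOn_of_unique hw ho hoy
    (fun p hp hpj => h.eq_of_mates_apply_ne hw hmates hp hpj ho hoy) ht⟩

theorem exists_mate_apply_eq_right_of_crossing (h : LightPair c V W i j s x y)
    (hw : Crossing c W i s x w) (hmates : ∀ p ∈ mates c V i s w, p j ≠ x j)
    (hw' : Crossing c W i s x w') : ∃ p ∈ mates c V i s w', p j = y j := by
  by_contra! hmates'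
  have hw'y := h.crossing_right hw'
  obtain ⟨o, ho, hoj, hox⟩ := h.exists_left_eqOn hw hmates
  obtain ⟨q, hq, hqj⟩ := h.exists_mate_apply_eq_right hw hmates
  obtain ⟨o', ho', ho'j, ho'y⟩ := h.symm.exists_left_eqOn hw'y hmates'
  obtain ⟨q', hq', hq'j⟩ := h.symm.exists_mate_apply_eq_right hw'y hmates'
  obtain ⟨t, ht, hxy⟩ := h.exists_apply_ne
  have hoo' : o ≠ o' := ne_of_apply_ne (fun v => v t)
    (by simpa only [← hox t ht, ← ho'y t ht] using hxy)
  have hoq : o j ≠ q j := by rw [hoj, hqj]; exact h.crossing_apply_ne_right hw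
  have ho'q : o' j ≠ q j := by rw [ho'j, hqj]; exact h.crossing_apply_ne_right hw'
  rcases h.eq_or_eq_or_eq (mates_subset_slice ho) (mates_subset_slice ho') (mates_subset_slice hq)
    hoo' (ne_of_apply_ne (fun v => v j) hoq) (ne_of_apply_ne (fun v => v j) ho'q)
    (mates_subset_slice hq') with rfl | rfl | rfl
  · exact h.crossing_apply_ne_left hw (hoj.symm.trans hq'j)
  · exact h.crossing_apply_ne_left hw' (ho'j.symm.trans hq'j)
  · exact h.apply_ne (hq'j.symm.trans hqj)

theorem right_eq_or_eq (h : LightPair c V W i j s x y) (hw : Crossing c W i s x w)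
    (hmates : ∀ p ∈ mates c V i s w, p j ≠ x j) (ht : t ∈ ({i, j}ᶜ : Set (Fin d))) :
    y t = w t ∨ y t = x t := by
  refine hw.meets.symm.eq_or_eq_of_forall_mem fun B hBw hBx => ?_
  have hBwT := realize_subset_cyl {i, j}ᶜ w hBw
  obtain ⟨p, hp, hBp⟩ := (h.agreeOn_left hw B hBwT).1
    ⟨x, mem_singleton_self x, realize_subset_cyl _ x hBx⟩
  have hpm := (mem_filter.1 hp).1
  obtain ⟨v, hv, hBv⟩ := (h.symm.agreeOn_left (h.crossing_right hw) B hBwT).2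
    ⟨p, mem_filter.2 ⟨hpm, hmates p hpm⟩, hBp⟩
  exact mem_singleton.1 hv ▸ (hBv t ht).2

theorem four_le_card_slice_right (h : LightPair c V W i j s x y) (hw : Crossing c W i s x w)
    (hmates : ∀ p ∈ mates c V i s w, p j ≠ x j) (ht : t ∈ ({i, j}ᶜ : Set (Fin d)))
    (hxy : x t = y t) (hwy : w t ≠ y t) : 4 ≤ #(slice V t (y t)) := by
  obtain ⟨o, ho, hoj, hox⟩ := h.exists_left_eqOn hw hmates
  obtain ⟨q, hq, hqj⟩ := h.exists_mate_apply_eq_right hw hmates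
  have hywq : y t = w t ∨ y t = q t := (h.symm.agreeOn_left (h.crossing_right hw)).eq_or_eq
    (fun p hp => (mem_mates.1 (mem_filter.1 hp).1).2.1) (mem_filter.2 ⟨hq, hmates q hq⟩) ht
  have hqt : q t = y t := (hywq.resolve_left hwy.symm).symm
  have hot : o t = y t := (hox t ht).symm.trans hxy
  have hmate {v p : Fin d → S} (hv : v i = s) (hp : p ∈ mates c V i s w) : v ≠ p :=
    ne_of_apply_ne (fun v => v i) (by simpa only [hv, (mem_mates.1 hp).2.2] using ne_apply s)
  have hxne : x ≠ y := ne_of_apply_ne (fun v => v j) h.apply_ne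
  have hoq : o ≠ q := ne_of_apply_ne (fun v => v j)
    (by simpa only [hoj, hqj] using h.crossing_apply_ne_right hw)
  refine length_le_card (L := [x, y, o, q]) ?_ ?_
  · simp [hxne, hoq, hmate h.left_apply ho, hmate h.left_apply hq, hmate h.right_apply ho,
      hmate h.right_apply hq]
  · simp [mem_slice, h.left_mem, h.right_mem, mates_subset ho, mates_subset hq, hxy, hot, hqt]

theorem exists_compl_of_mem (h : LightPair c V W i j s x y) (hw : Crossing c W i s x w)
    (hz : z ∈ V) (hzj : z j = x j) (hzi : z i = w i) :
    ∃ l ∈ ({i, j}ᶜ : Set (Fin d)), z l = c (x l) := by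
  have hxz : x ≠ z := ne_of_apply_ne (fun v => v i)
    (by simpa only [h.left_apply, hzi] using hw.apply_ne.symm)
  obtain ⟨l, hl⟩ := h.pair.left.code x h.left_mem z hz hxz
  refine ⟨l, ?_, hl⟩
  rintro (rfl | rfl)
  · exact hw.apply_ne_compl (by rw [← hzi, hl, h.left_apply])
  · exact ne_apply _ (hzj ▸ hl)

variable [Finite S]

theorem exists_mem_crossing_apply (h : LightPair c V W i j s x y) (hw : Crossing c W i s x w)
    (hmates : ∀ p ∈ mates c V i s w, p j ≠ x j) : ∃ z ∈ V, z j = x j ∧ z i = w i := by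
  obtain ⟨t, ht, hxy⟩ := h.exists_apply_ne
  have hyw : y t = w t := (h.right_eq_or_eq hw hmates ht).resolve_right hxy.symm
  exact h.exists_mem_of_apply_ne hw ht (hyw ▸ hxy) hxy

theorem exists_crossing_apply_ne (h : LightPair c V W i j s x y) (hw : Crossing c W i s x w)
    (hmates : ∀ p ∈ mates c V i s w, p j ≠ x j) (ht : t ∈ ({i, j}ᶜ : Set (Fin d)))
    (hxy : x t = y t) (he : e ≠ y t) : ∃ u, Crossing c W i s x u ∧ u i = w i ∧ u t ≠ e := by
  by_contra! hall
  obtain rfl := hall w hw rfl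
  have hti : t ≠ i := fun hti => ht (Or.inl hti)
  have hweight_w : 6 ≤ weight c V W t (w t) :=
    h.six_le_weight_of_forall_crossing hw fun u hu hui => hui.elim (hall u hu)
      (h.crossing_apply_eq_of_forall hw hall hti (hxy ▸ he) hu)
  have hweight_y : 6 ≤ weight c V W t (y t) :=
    h.pair.six_le_weight (h.four_le_card_slice_right hw hmates ht hxy he)
  have hsum := h.pair.weight_add_weight_le t he (h.right_meets hw t)
  have := h.card_le
  omega

theorem eq_of_mem_of_apply (h : LightPair c V W i j s x y)
    (hmates : ∀ w, Crossing c W i s x w → ∀ p ∈ mates c V i s w, p j ≠ x j)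
    (hw : Crossing c W i s x w) (hz : z ∈ V) (hzj : z j = x j) (hzi : z i = w i)
    (hv : v ∈ V) (hvj : v j = x j) (hvi : v i = w i) : v = z := by
  by_contra hvz
  obtain ⟨w', hw', hw'i⟩ := h.exists_crossing_compl hw
  obtain ⟨z', hz', hz'j, hz'i⟩ := h.exists_mem_crossing_apply hw' (hmates w' hw')
  have hne_x {u : Fin d → S} (hui : u i = w i) : x ≠ u := ne_of_apply_ne (fun v => v i)
    (by simpa only [h.left_apply, hui] using hw.apply_ne.symm)
  have hxz' : x ≠ z' := ne_of_apply_ne (fun v => v i)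
    (by simpa only [h.left_apply, hz'i] using hw'.apply_ne.symm)
  have hne_z' {u : Fin d → S} (hui : u i = w i) : u ≠ z' := ne_of_apply_ne (fun v => v i)
    (by simpa only [hui, hz'i, hw'i] using ne_apply (w i))
  have := length_le_card (P := slice V j (x j)) (L := [x, v, z, z'])
    (by simp [hne_x hvi, hne_x hzi, hxz', hvz, hne_z' hvi, hne_z' hzi])
    (by simp [mem_slice, h.left_mem, hv, hvj, hz, hzj, hz', hz'j])
  exact absurd (this.trans h.card_slice_left_le) (by simp)

theorem cyl_inter_subset (h : LightPair c V W i j s x y)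
    (hmates : ∀ w, Crossing c W i s x w → ∀ p ∈ mates c V i s w, p j ≠ x j)
    (hw : Crossing c W i s x w) (hz : z ∈ V) (hzj : z j = x j) (hzi : z i = w i) :
    cyl c {i, j}ᶜ w ∩ cyl c {i, j}ᶜ y ⊆ cyl c {i, j}ᶜ x ∪ cyl c {i, j}ᶜ z := by
  rintro B ⟨hBw, hBy⟩
  refine or_iff_not_imp_left.2 fun hBx => ?_
  obtain ⟨v, hv, hvj, hvi, hBv⟩ := h.exists_mem_of_notMem_cyl hw hBw hBy hBx
  exact h.eq_of_mem_of_apply hmates hw hz hzj hzi hv hvj hvi ▸ hBv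

theorem left_eq_right_of_ne (h : LightPair c V W i j s x y)
    (hmates : ∀ w, Crossing c W i s x w → ∀ p ∈ mates c V i s w, p j ≠ x j)
    (hw : Crossing c W i s x w) (hz : z ∈ V) (hzj : z j = x j) (hzi : z i = w i)
    (hl : l ∈ ({i, j}ᶜ : Set (Fin d))) (hzl : z l = c (x l))
    (ht : t ∈ ({i, j}ᶜ : Set (Fin d))) (htl : t ≠ l) : x t = y t :=
  apply_eq_of_cyl_inter_subset hw.meets.symm (h.right_meets hw).symm
    (fun _ => h.right_eq_or_eq hw (hmates w hw)) (h.cyl_inter_subset hmates hw hz hzj hzi) hl hzl ht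
    htl

theorem left_ne_right (h : LightPair c V W i j s x y)
    (hmates : ∀ w, Crossing c W i s x w → ∀ p ∈ mates c V i s w, p j ≠ x j)
    (hw : Crossing c W i s x w) (hz : z ∈ V) (hzj : z j = x j) (hzi : z i = w i)
    (hl : l ∈ ({i, j}ᶜ : Set (Fin d))) (hzl : z l = c (x l)) : x l ≠ y l := by
  obtain ⟨t, ht, hxy⟩ := h.exists_apply_ne
  obtain rfl | htl := eq_or_ne t l
  · exact hxy
  · exact absurd (h.left_eq_right_of_ne hmates hw hz hzj hzi hl hzl ht htl) hxy

theorem apply_eq_right_of_ne (h : LightPair c V W i j s x y)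
    (hmates : ∀ w, Crossing c W i s x w → ∀ p ∈ mates c V i s w, p j ≠ x j)
    (hw : Crossing c W i s x w) (hz : z ∈ V) (hzj : z j = x j) (hzi : z i = w i)
    (hl : l ∈ ({i, j}ᶜ : Set (Fin d))) (hzl : z l = c (x l))
    (ht : t ∈ ({i, j}ᶜ : Set (Fin d))) (htl : t ≠ l) : z t = y t := by
  by_contra hzy
  obtain ⟨u, hu, hui, hut⟩ := h.exists_crossing_apply_ne hw (hmates w hw) ht
    (h.left_eq_right_of_ne hmates hw hz hzj hzi hl hzl ht htl) hzy
  have hxyl := h.left_ne_right hmates hw hz hzj hzi hl hzl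
  have hyu : y l = u l := (h.right_eq_or_eq hu (hmates u hu) hl).resolve_right hxyl.symm
  have hzt := apply_eq_or_eq_of_cyl_inter_subset (h.right_meets hu).symm
    (h.cyl_inter_subset hmates hu hz hzj (hzi.trans hui.symm)) hl hyu hxyl ht htl
  exact hzt.elim hut.symm hzy

/- The words of `V` with the letter of `x` at `j` given by two crossing words complementary at `i`
both agree with `y` away from `i`, `j` and the coordinate `l` where `x` and `y` differ, so they
would form a twin pair. -/
theorem exists_crossing_mate_apply_eq_left (h : LightPair c V W i j s x y) :
    ∃ w, Crossing c W i s x w ∧ ∃ p ∈ mates c V i s w, p j = x j := by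
  by_contra! hmates
  obtain ⟨w, hw⟩ := h.exists_crossing
  obtain ⟨w', hw', hw'i⟩ := h.exists_crossing_compl hw
  obtain ⟨z, hz, hzj, hzi⟩ := h.exists_mem_crossing_apply hw (hmates w hw)
  obtain ⟨z', hz', hz'j, hz'i⟩ := h.exists_mem_crossing_apply hw' (hmates w' hw')
  obtain ⟨l, hl, hzl⟩ := h.exists_compl_of_mem hw hz hzj hzi
  obtain ⟨l', hl', hz'l⟩ := h.exists_compl_of_mem hw' hz' hz'j hz'i
  obtain rfl : l = l' := by
    by_contra hll'
    exact h.left_ne_right hmates hw hz hzj hzi hl hzl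
      (h.left_eq_right_of_ne hmates hw' hz' hz'j hz'i hl' hz'l hl hll')
  have heq : z = z' := by
    refine h.pair.left.eq_of_forall_ne (i := i) hz hz' fun t hti => ?_
    obtain rfl | htj := eq_or_ne t j
    · rw [hzj, hz'j]
    obtain rfl | htl := eq_or_ne t l
    · rw [hzl, hz'l]
    have ht : t ∈ ({i, j}ᶜ : Set (Fin d)) := by simp [hti, htj]
    rw [h.apply_eq_right_of_ne hmates hw hz hzj hzi hl hzl ht htl,
      h.apply_eq_right_of_ne hmates hw' hz' hz'j hz'i hl hz'l ht htl]
  exact ne_apply (c := c) (w i) (by rw [← hw'i, ← hz'i, ← heq, hzi])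

end LightPair

theorem not_lightPair [Finite S] : ¬ LightPair c V W i j s x y := by
  intro h
  obtain ⟨w, hw, p, hp, hpj⟩ := h.exists_crossing_mate_apply_eq_left
  obtain ⟨u, hu, q, hq, hqj⟩ := h.symm.exists_crossing_mate_apply_eq_left
  have hux := h.symm.crossing_right hu
  have hw_ne : ∀ p ∈ mates c V i s w, p j ≠ y j :=
    (h.mates_apply_ne_left_or_right hw).resolve_left fun hmates => hmates p hp hpj
  have hu_ne : ∀ q ∈ mates c V i s u, q j ≠ x j :=
    (h.mates_apply_ne_left_or_right hux).resolve_right fun hmates => hmates q hq hqj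
  obtain ⟨o, ho, hoj⟩ := h.exists_mate_apply_eq_right_of_crossing hux hu_ne hw
  exact hw_ne o ho hoj

end OneSided

section CommonWords

variable {S : Type*} [DecidableEq S] {c : S → S} {d : ℕ} {i : Fin d} {s : S} {v : Fin d → S}
  {V W : Finset (Fin d → S)}

theorem biUnion_realize_sdiff_subset (hV : PolyboxCode c (V : Set (Fin d → S)))
    (h : Equivalent c (V : Set (Fin d → S)) W) :
    ⋃ v ∈ V \ W, realize c v ⊆ ⋃ w ∈ W \ V, realize c w := by
  refine Set.iUnion₂_subset fun v hv B hBv => ?_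
  obtain ⟨hvV, hvW⟩ := mem_sdiff.1 hv
  obtain ⟨w, hw, hBw⟩ := Set.mem_iUnion₂.1 (h.subset (Set.mem_biUnion (mem_coe.2 hvV) hBv))
  refine Set.mem_biUnion (mem_sdiff.2 ⟨hw, fun hwV => hvW ?_⟩) hBw
  exact eq_of_mem_realize hV hvV hwV hBv hBw ▸ hw

theorem TwinFreeCode.twinFreePair_sdiff (hV : TwinFreeCode c V) (hW : TwinFreeCode c W)
    (h : Equivalent c (V : Set (Fin d → S)) W) : TwinFreePair c (V \ W) (W \ V) where
  left := hV.mono sdiff_subset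
  right := hW.mono sdiff_subset
  disjoint := disjoint_sdiff_sdiff
  equivalent := (biUnion_realize_sdiff_subset hV.code h).antisymm
    (biUnion_realize_sdiff_subset hW.code h.symm)

variable [Finite S] [IsComplementation c]

theorem TwinFreePair.card_slice_ne_two (h : TwinFreePair c V W) (hcard : #V ≤ 11)
    (h5 : weight c V W i s ≤ 5) : #(slice V i s) ≠ 2 := by
  intro h2
  obtain ⟨x, y, hxy, heq⟩ := card_eq_two.1 h2
  have hmem {v : Fin d → S} : v ∈ V ∧ v i = s ↔ v = x ∨ v = y := by
    rw [← mem_slice, heq, mem_insert, mem_singleton]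
  obtain ⟨hx, hxi⟩ := hmem.2 (Or.inl rfl)
  obtain ⟨hy, hyi⟩ := hmem.2 (Or.inr rfl)
  obtain ⟨j, hj⟩ := h.left.code x hx y hy hxy
  have hslices := h.two_le_card_slices h5 (card_pos.1 (by omega))
  exact not_lightPair
    { pair := h
      card_le := hcard
      weight_le := h5
      left_mem := hx
      right_mem := hy
      left_apply := hxi
      right_apply := hyi
      eq_or_eq := fun v hv hvi => hmem.1 ⟨hv, hvi⟩
      right_compl := hj
      card_slice_le := by rw [h.weight_eq] at h5; omega }

theorem TwinFreePair.six_le_weight_of_mem (h : TwinFreePair c V W) (hcard : #V ≤ 11)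
    (hv : v ∈ V) (i : Fin d) : 6 ≤ weight c V W i (v i) := by
  by_contra! hlt
  have h5 : weight c V W i (v i) ≤ 5 := Nat.le_of_lt_succ hlt
  have h5W : weight c W V i (c (v i)) ≤ 5 := by rwa [h.weight_symm, h.weight_apply]
  have hcardW : #W ≤ 11 := (card_eq_of_equivalent h.left.code h.right.code h.equivalent) ▸ hcard
  have hV2 := h.card_slice_ne_two hcard h5
  have hW2 := h.symm.card_slice_ne_two hcardW h5W
  have hslices := h.two_le_card_slices h5 ⟨v, mem_slice.2 ⟨hv, rfl⟩⟩
  rw [weight] at h5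
  omega

end CommonWords

section Equality

variable {S : Type*} [Finite S] {c : S → S} [IsComplementation c] {d : ℕ}
  {V W : Finset (Fin d → S)}

theorem TwinFreePair.eq_empty (h : TwinFreePair c V W) (hcard : #V ≤ 11) : V = ∅ := by
  classical
  refine eq_empty_of_forall_notMem fun v hv => ?_
  obtain ⟨B, hBv, -⟩ := (Meets.refl (c := c) v).exists_mem_realize
  obtain ⟨w, hw, hBw⟩ := (h.covers hv).exists_mem hBv
  obtain ⟨i, hi⟩ := ne_iff.1 (show w ≠ v from fun hwv => h.notMem hv (hwv ▸ hw))
  have hcardW : #W ≤ 11 := (card_eq_of_equivalent h.left.code h.right.code h.equivalent) ▸ hcard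
  have hweight_v := h.six_le_weight_of_mem hcard hv i
  have hweight_w := h.symm.six_le_weight_of_mem hcardW hw i
  rw [h.weight_symm] at hweight_w
  have := h.weight_add_weight_le i hi (meets_of_mem_realize hBv hBw i)
  omega

theorem TwinFreeCode.subset_of_equivalent (hV : TwinFreeCode c V) (hW : TwinFreeCode c W)
    (h : Equivalent c (V : Set (Fin d → S)) W) (hcard : #V ≤ 11) : V ⊆ W := by
  classical
  exact sdiff_eq_empty_iff_subset.1 ((hV.twinFreePair_sdiff hW h).eq_empty
    ((card_le_card sdiff_subset).trans hcard))

theorem TwinFreeCode.eq_of_equivalent (hV : TwinFreeCode c V) (hW : TwinFreeCode c W)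
    (h : Equivalent c (V : Set (Fin d → S)) W) (hcard : #V ≤ 11) : W = V :=
  (hW.subset_of_equivalent hV h.symm (card_eq_of_equivalent hV.code hW.code h ▸ hcard)).antisymm
    (hV.subset_of_equivalent hW h hcard)

end Equality

end PolyboxCode

/-- If `V, W ⊆ S^d` are equivalent polybox codes, neither of which contains a
twin pair, and `|V| ≤ 11`, then `W = V`. -/
theorem eq_of_equiv_card_le_eleven {S : Type*} [Fintype S] (c : S → S)
    (hinv : ∀ s, c (c s) = s) (hne : ∀ s, c s ≠ s) {d : ℕ}
    (V W : Set (Fin d → S))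
    (hV : PolyboxCode c V) (hW : PolyboxCode c W)
    (hequiv : Equivalent c V W)
    (hVtf : ∀ u ∈ V, ∀ v ∈ V, ¬ TwinPair c u v)
    (hWtf : ∀ u ∈ W, ∀ v ∈ W, ¬ TwinPair c u v)
    (hcard : V.ncard ≤ 11) :
    W = V := by
  classical
  have : PolyboxCode.IsComplementation c := ⟨hinv, hne⟩
  lift V to Finset (Fin d → S) using V.toFinite
  lift W to Finset (Fin d → S) using W.toFinite
  rw [Set.ncard_coe_finset] at hcard
  exact congrArg _ (PolyboxCode.TwinFreeCode.eq_of_equivalent ⟨hV, hVtf⟩ ⟨hW, hWtf⟩ hequiv hcard)
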